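/- arXiv:1908.05198 — 4 statements merged into one kernel-verified Lean document; each statement's English description precedes it below -/
import Mathlib

section
/- There exist an absolute constant c > 0 and an absolute constant B_0 ∈ ℕ such that the following holds. Let n, B ∈ ℕ with B ≥ B_0 and n ≥ 2B, let h : {1,...,n} → {1,...,B} and s : {1,...,n} → {−1,1} be truly random, fix i ∈ {1,...,n}, and set X = Σ_{j∈{1,...,n}, j≠i} 1[h(j)=h(i)]·s(j)·(1/j). Then for every real t with 0 < t ≤ 1/(2B), Pr[−t ≤ X ≤ t] ≥ c·t·B. -/
/-- Expectation of a real-valued random variable on a finite probability space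
with the uniform distribution. -/
noncomputable def expUnif {Ω : Type*} [Fintype Ω] (X : Ω → ℝ) : ℝ :=
  (∑ ω : Ω, X ω) / (Fintype.card Ω : ℝ)

open Classical in
/-- Probability of an event on a finite probability space with the
uniform distribution. -/
noncomputable def prUnif {Ω : Type*} [Fintype Ω] (P : Ω → Prop) : ℝ :=
  (∑ ω : Ω, if P ω then (1 : ℝ) else 0) / (Fintype.card Ω : ℝ)

/-- The sign `±1` encoded by a boolean. -/
def sgn (b : Bool) : ℝ := if b then 1 else -1

/-!
Because the signs are symmetric, the counter error `X` has the real characteristic function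
`φ u = ∏_{j ≠ i} (1 - (1 - cos (u / j)) / B)`. It is nonnegative, and for `|u| ≤ B` it is bounded
below by an absolute constant, since `∑ j, (1 - cos (u / j)) = O(B)`.

The bump `k x = 2 exp (-2 x²) - exp (-x²)` lies below the indicator of `[-1, 1]`, yet it is the
Fourier transform of a nonnegative density `g` that is bounded below on `[-1, 1]`. Hence
`Pr[|X| ≤ t] ≥ 𝔼 k (X / t) = ∫ g(u) φ(u / t) du`. As the integrand is nonnegative, the part with
`|u| ≤ t B` already contributes a constant multiple of `t B`.
-/

open Finset MeasureTheory ProbabilityTheory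
open scoped BigOperators

section Expectation

lemma prUnif_eq_expect {Ω : Type*} [Fintype Ω] (P : Ω → Prop) [DecidablePred P] :
    prUnif P = 𝔼 ω, if P ω then (1 : ℝ) else 0 := by
  rw [prUnif, Fintype.expect_eq_sum_div_card]
  congr!

lemma expect_prod_apply {ι κ K : Type*} [Fintype ι] [DecidableEq ι] [Fintype κ] [Nonempty κ]
    [Semifield K] [CharZero K] (S : Finset ι) (g : ι → κ → K) :
    𝔼 f : ι → κ, ∏ j ∈ S, g j (f j) = ∏ j ∈ S, 𝔼 k, g j k := by
  have prod_univ (f : ι → κ) : ∏ j ∈ S, g j (f j) = ∏ j, if j ∈ S then g j (f j) else 1 := by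
    rw [prod_ite_mem, univ_inter]
  have expect_factor (j : ι) :
      (𝔼 k, if j ∈ S then g j k else 1) = if j ∈ S then 𝔼 k, g j k else 1 := by
    split_ifs
    exacts [rfl, Fintype.expect_one]
  calc 𝔼 f : ι → κ, ∏ j ∈ S, g j (f j)
      = ∏ j, 𝔼 k, if j ∈ S then g j k else 1 := by
        simp only [prod_univ, Fintype.expect_eq_sum_div_card, prod_div_distrib, prod_const,
          card_univ, Fintype.card_fun, Nat.cast_pow,
          Fintype.prod_sum fun (j : ι) (k : κ) => if j ∈ S then g j k else 1]
    _ = ∏ j ∈ S, 𝔼 k, g j k := by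
        simp only [expect_factor]
        rw [prod_ite_mem, univ_inter]

end Expectation

section SmallBall

lemma integral_gaussianPDFReal_mul_cos {v : NNReal} (hv : v ≠ 0) (x : ℝ) :
    ∫ u, gaussianPDFReal 0 v u * Real.cos (u * x) = Real.exp (-(v * x ^ 2 / 2)) := by
  have integrable_charFun : Integrable (fun u : ℝ => Complex.exp (x * u * Complex.I))
      (gaussianReal 0 v) :=
    (integrable_const (1 : ℝ)).mono' (by fun_prop) (.of_forall fun u => by
      rw [← Complex.ofReal_mul, Complex.norm_exp_ofReal_mul_I])
  have re_charFun : (charFun (gaussianReal 0 v) x).re = Real.exp (-(v * x ^ 2 / 2)) := by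
    rw [charFun_gaussianReal, ← Complex.exp_ofReal_re]
    push_cast
    ring_nf
  have integral_re_eq := integral_re integrable_charFun
  rw [← charFun_apply_real, RCLike.re_eq_complex_re, re_charFun,
    integral_gaussianReal_eq_integral_smul hv] at integral_re_eq
  rw [← integral_re_eq]
  refine integral_congr_ae (.of_forall fun u => ?_)
  simp only [smul_eq_mul, ← Complex.ofReal_mul, Complex.exp_ofReal_mul_I_re, mul_comm x u]

/-- A minorant of the indicator of `[-1, 1]` that is the Fourier transform of a nonnegative
function, `bumpDensity`. -/
noncomputable def bump (x : ℝ) : ℝ := 2 * Real.exp (-(2 * x ^ 2)) - Real.exp (-x ^ 2)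

/-- The inverse Fourier transform of `bump`, a combination of centred Gaussian densities of
variances `4` and `2`. -/
noncomputable def bumpDensity (u : ℝ) : ℝ := 2 * gaussianPDFReal 0 4 u - gaussianPDFReal 0 2 u

lemma bump_eq_mul (x : ℝ) : bump x = Real.exp (-x ^ 2) * (2 * Real.exp (-x ^ 2) - 1) := by
  rw [bump, two_mul (x ^ 2), neg_add, Real.exp_add]
  ring

lemma bump_le_one (x : ℝ) : bump x ≤ 1 := by
  have exp_le_one : Real.exp (-x ^ 2) ≤ 1 := Real.exp_le_one_iff.2 (by nlinarith)
  rw [bump_eq_mul]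
  nlinarith [Real.exp_pos (-x ^ 2)]

lemma bump_nonpos {x : ℝ} (hx : 1 ≤ |x|) : bump x ≤ 0 := by
  have one_le_sq : 1 ≤ x ^ 2 := (one_le_sq_iff_one_le_abs x).2 hx
  have exp_le_half : Real.exp (-x ^ 2) ≤ 2⁻¹ := by
    rw [Real.exp_neg]
    exact inv_anti₀ two_pos (by linarith [Real.add_one_le_exp (x ^ 2)])
  rw [bump_eq_mul]
  exact mul_nonpos_of_nonneg_of_nonpos (Real.exp_nonneg _) (by linarith)

lemma integrable_bumpDensity : Integrable bumpDensity :=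
  ((integrable_gaussianPDFReal 0 4).const_mul 2).sub (integrable_gaussianPDFReal 0 2)

lemma integrable_mul_cos {f : ℝ → ℝ} (hf : Integrable f) (x : ℝ) :
    Integrable fun u => f u * Real.cos (u * x) :=
  hf.mul_bdd (c := 1) (by fun_prop) (.of_forall fun u => Real.abs_cos_le_one (u * x))

lemma integral_bumpDensity_mul_cos (x : ℝ) :
    ∫ u, bumpDensity u * Real.cos (u * x) = bump x := by
  simp only [bumpDensity, sub_mul, mul_assoc]
  rw [integral_sub ((integrable_mul_cos (integrable_gaussianPDFReal 0 4) x).const_mul 2)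
      (integrable_mul_cos (integrable_gaussianPDFReal 0 2) x),
    integral_const_mul, integral_gaussianPDFReal_mul_cos four_ne_zero,
    integral_gaussianPDFReal_mul_cos two_ne_zero, bump]
  push_cast
  ring_nf

lemma bumpDensity_eq (u : ℝ) :
    bumpDensity u = (√Real.pi)⁻¹ *
      (Real.exp (-(u ^ 2 / 8)) * (√2 / 2 - Real.exp (-(u ^ 2 / 8)) / 2)) := by
  have sqrt_eight_pi : √(2 * Real.pi * 4) = 2 * √2 * √Real.pi := by
    rw [show 2 * Real.pi * 4 = 2 ^ 2 * 2 * Real.pi by ring, Real.sqrt_mul (by norm_num),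
      Real.sqrt_mul (by norm_num), Real.sqrt_sq two_pos.le]
  have sqrt_four_pi : √(2 * Real.pi * 2) = 2 * √Real.pi := by
    rw [show 2 * Real.pi * 2 = 2 ^ 2 * Real.pi by ring, Real.sqrt_mul (by norm_num),
      Real.sqrt_sq two_pos.le]
  have exp_sq : Real.exp (-(u ^ 2 / 4)) = Real.exp (-(u ^ 2 / 8)) ^ 2 := by
    rw [← Real.exp_nat_mul]
    push_cast
    ring_nf
  have exp_variance_four : -(u - 0) ^ 2 / (2 * 4) = -(u ^ 2 / 8) := by ring
  have exp_variance_two : -(u - 0) ^ 2 / (2 * 2) = -(u ^ 2 / 4) := by ring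
  simp only [bumpDensity, gaussianPDFReal, NNReal.coe_ofNat]
  rw [sqrt_eight_pi, sqrt_four_pi, exp_variance_four, exp_variance_two, exp_sq]
  field_simp
  linear_combination -Real.mul_self_sqrt (zero_le_two : (0 : ℝ) ≤ 2)

lemma exp_mul_le_bumpDensity (u : ℝ) : Real.exp (-(u ^ 2 / 8)) / 10 ≤ bumpDensity u := by
  have exp_le_one : Real.exp (-(u ^ 2 / 8)) ≤ 1 := Real.exp_le_one_iff.2 (by nlinarith)
  have le_sqrt_two : 7 / 5 ≤ √2 := Real.le_sqrt_of_sq_le (by norm_num)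
  have half_le : 1 / 2 ≤ (√Real.pi)⁻¹ := by
    rw [one_div]
    refine inv_anti₀ (by positivity) (Real.sqrt_le_iff.2 ⟨by norm_num, ?_⟩)
    linarith [Real.pi_le_four]
  calc Real.exp (-(u ^ 2 / 8)) / 10 = 1 / 2 * (Real.exp (-(u ^ 2 / 8)) * (1 / 5)) := by ring
    _ ≤ bumpDensity u := by
      rw [bumpDensity_eq]
      gcongr
      linarith

lemma bumpDensity_nonneg (u : ℝ) : 0 ≤ bumpDensity u :=
  (by positivity : 0 ≤ Real.exp (-(u ^ 2 / 8)) / 10).trans (exp_mul_le_bumpDensity u)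

lemma one_div_twelve_le_bumpDensity {u : ℝ} (hu : |u| ≤ 1) : 1 / 12 ≤ bumpDensity u := by
  have sq_le : u ^ 2 ≤ 1 := (sq_le_one_iff_abs_le_one u).2 hu
  linarith [exp_mul_le_bumpDensity u, Real.add_one_le_exp (-(u ^ 2 / 8))]

variable {Ω : Type*} [Fintype Ω] {X : Ω → ℝ} {b δ t : ℝ}

lemma le_prUnif_abs_le_one (hb : 0 ≤ b) (hb_one : b ≤ 1)
    (hpos : ∀ u, 0 ≤ 𝔼 ω, Real.cos (u * X ω))
    (hlow : ∀ u, |u| ≤ b → δ ≤ 𝔼 ω, Real.cos (u * X ω)) :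
    b * δ / 6 ≤ prUnif fun ω => |X ω| ≤ 1 := by
  let F : ℝ → ℝ := fun u => bumpDensity u * 𝔼 ω, Real.cos (u * X ω)
  have F_eq : F = fun u => (∑ ω, bumpDensity u * Real.cos (u * X ω)) / Fintype.card Ω := by
    ext u
    simp only [F, Fintype.expect_eq_sum_div_card, mul_div_assoc', mul_sum]
  have summand_integrable (ω : Ω) : Integrable fun u => bumpDensity u * Real.cos (u * X ω) :=
    integrable_mul_cos integrable_bumpDensity (X ω)
  have F_integrable : Integrable F := by
    rw [F_eq]
    exact (integrable_finsetSum _ fun ω _ => summand_integrable ω).div_const _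
  have integral_F : ∫ u, F u = 𝔼 ω, bump (X ω) := by
    rw [F_eq, integral_div, integral_finsetSum _ fun ω _ => summand_integrable ω,
      Fintype.expect_eq_sum_div_card]
    simp only [integral_bumpDensity_mul_cos]
  calc b * δ / 6 = ∫ _u in Set.Icc (-b) b, 1 / 12 * δ := by
        rw [setIntegral_const, Real.volume_real_Icc_of_le (neg_le_self hb), smul_eq_mul]
        ring
    _ ≤ ∫ u in Set.Icc (-b) b, F u := by
        refine setIntegral_mono_on (integrableOn_const (by simp)) F_integrable.integrableOn
          measurableSet_Icc fun u hu => ?_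
        have abs_u_le : |u| ≤ b := abs_le.2 hu
        exact (mul_le_mul_of_nonneg_left (hlow u abs_u_le) (by norm_num)).trans
          (mul_le_mul_of_nonneg_right
            (one_div_twelve_le_bumpDensity (abs_u_le.trans hb_one)) (hpos u))
    _ ≤ ∫ u, F u := setIntegral_le_integral F_integrable
        (.of_forall fun u => mul_nonneg (bumpDensity_nonneg u) (hpos u))
    _ = 𝔼 ω, bump (X ω) := integral_F
    _ ≤ prUnif fun ω => |X ω| ≤ 1 := by
        classical
        rw [prUnif_eq_expect]
        gcongr with ω
        split_ifs with h
        exacts [bump_le_one _, bump_nonpos (not_le.1 h).le]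

theorem le_prUnif_abs_le (ht : 0 < t) (hb : 0 ≤ b) (htb : t * b ≤ 1)
    (hpos : ∀ u, 0 ≤ 𝔼 ω, Real.cos (u * X ω))
    (hlow : ∀ u, |u| ≤ b → δ ≤ 𝔼 ω, Real.cos (u * X ω)) :
    t * b * δ / 6 ≤ prUnif fun ω => |X ω| ≤ t := by
  have expect_rescaled (u : ℝ) :
      𝔼 ω, Real.cos (u * (X ω / t)) = 𝔼 ω, Real.cos (u / t * X ω) := by
    simp only [div_mul_eq_mul_div, mul_div_assoc]
  have rescaled := le_prUnif_abs_le_one (X := fun ω => X ω / t) (δ := δ)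
    (mul_nonneg ht.le hb) htb
    (fun u => (hpos (u / t)).trans_eq (expect_rescaled u).symm)
    (fun u hu => by
      rw [expect_rescaled]
      refine hlow _ ?_
      rwa [abs_div, abs_of_pos ht, div_le_iff₀' ht])
  simpa only [abs_div, abs_of_pos ht, div_le_one ht] using rescaled

end SmallBall

section Counter

lemma exp_neg_two_mul_le_one_sub {y : ℝ} (hy : 0 ≤ y) (hy_half : y ≤ 1 / 2) :
    Real.exp (-(2 * y)) ≤ 1 - y := by
  rw [Real.exp_neg]
  refine inv_le_of_inv_le₀ (by linarith) (le_trans ?_ (Real.add_one_le_exp (2 * y)))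
  rw [inv_le_iff_one_le_mul₀ (by linarith)]
  nlinarith

lemma exp_neg_two_mul_sum_le_prod_one_sub {ι : Type*} {S : Finset ι} {y : ι → ℝ}
    (hy : ∀ j ∈ S, 0 ≤ y j) (hy_half : ∀ j ∈ S, y j ≤ 1 / 2) :
    Real.exp (-(2 * ∑ j ∈ S, y j)) ≤ ∏ j ∈ S, (1 - y j) := by
  rw [mul_sum, ← sum_neg_distrib, Real.exp_sum]
  gcongr with j hj
  exact exp_neg_two_mul_le_one_sub (hy j hj) (hy_half j hj)

variable {ι κ : Type*} [Fintype ι] [DecidableEq ι]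

lemma expect_cos_sum_sgn_mul (S : Finset ι) (a : ι → ℝ) :
    𝔼 s : ι → Bool, Real.cos (∑ j ∈ S, sgn (s j) * a j) = ∏ j ∈ S, Real.cos (a j) := by
  have exp_expect : 𝔼 s : ι → Bool, Complex.exp ((∑ j ∈ S, sgn (s j) * a j : ℝ) * Complex.I) =
      (∏ j ∈ S, Real.cos (a j) : ℝ) := by
    simp only [Complex.ofReal_sum, sum_mul, Complex.exp_sum]
    rw [expect_prod_apply S fun j b => Complex.exp ((sgn b * a j : ℝ) * Complex.I)]
    push_cast
    refine prod_congr rfl fun j _ => ?_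
    rw [Fintype.expect_eq_sum_div_card, Fintype.sum_bool, Fintype.card_bool, Complex.cos]
    simp [sgn]
  have re_expect := congrArg Complex.re exp_expect
  simpa only [Fintype.expect_eq_sum_div_card, Complex.div_natCast_re, Complex.re_sum,
    Complex.exp_ofReal_mul_I_re, Complex.ofReal_re] using re_expect

variable [Fintype κ] [DecidableEq κ]

/-- The error `∑_{j ≠ i} 1[h j = h i] s j w j` of the Count-Sketch counter of item `i` when item `j`
has frequency `w j` and the hash and sign functions are `ω = (h, s)`. -/
noncomputable def counterNoise (w : ι → ℝ) (i : ι) (ω : (ι → κ) × (ι → Bool)) : ℝ :=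
  ∑ j ∈ univ.erase i, if ω.1 j = ω.1 i then sgn (ω.2 j) * w j else 0

lemma expect_prod_collision [Nonempty κ] (a : ι → ℝ) (i : ι) :
    (𝔼 h : ι → κ, ∏ j ∈ univ.erase i, if h j = h i then a j else 1) =
      ∏ j ∈ univ.erase i, (1 - (1 - a j) / Fintype.card κ) := by
  have expect_ite (c : ℝ) (k : κ) :
      (𝔼 l : κ, if l = k then c else 1) = 1 - (1 - c) / Fintype.card κ := by
    have ite_eq (l : κ) : (if l = k then c else 1) = 1 - if l = k then 1 - c else 0 := by
      split_ifs <;> ring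
    rw [expect_congr rfl fun l _ => ite_eq l, expect_sub_distrib, Fintype.expect_one,
      Fintype.expect_eq_sum_div_card, Fintype.sum_ite_eq']
  have prod_erase_eq (f : ι → ℝ) : ∏ j ∈ univ.erase i, f j = ∏ j : {j // j ≠ i}, f j :=
    prod_subtype _ (by simp) f
  simp only [prod_erase_eq]
  calc (𝔼 h : ι → κ, ∏ j : {j // j ≠ i}, if h j = h i then a j else 1)
      = 𝔼 p : κ × ({j // j ≠ i} → κ), ∏ j : {j // j ≠ i}, if p.2 j = p.1 then a j else 1 :=
        Fintype.expect_equiv (Equiv.funSplitAt i κ) _ _ fun _ => rfl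
    _ = 𝔼 k : κ, 𝔼 g : {j // j ≠ i} → κ, ∏ j, if g j = k then a j else 1 := by
        rw [← univ_product_univ, expect_product]
    _ = ∏ j : {j // j ≠ i}, (1 - (1 - a j) / Fintype.card κ) := by
        simp only [fun k : κ => expect_prod_apply univ
          fun (j : {j // j ≠ i}) l => if l = k then a j else 1, expect_ite, Fintype.expect_const]

lemma expect_cos_counterNoise [Nonempty κ] (w : ι → ℝ) (i : ι) (u : ℝ) :
    𝔼 ω : (ι → κ) × (ι → Bool), Real.cos (u * counterNoise w i ω) =
      ∏ j ∈ univ.erase i, (1 - (1 - Real.cos (u * w j)) / Fintype.card κ) := by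
  have expect_signs (h : ι → κ) :
      𝔼 s : ι → Bool, Real.cos (u * counterNoise w i (h, s)) =
        ∏ j ∈ univ.erase i, if h j = h i then Real.cos (u * w j) else 1 := by
    rw [← prod_filter, ← expect_cos_sum_sgn_mul]
    simp only [counterNoise, ← sum_filter, mul_sum, mul_left_comm u]
  rw [← univ_product_univ, expect_product]
  simp only [expect_signs, expect_prod_collision]

lemma le_prUnif_abs_counterNoise_le (hκ : 4 ≤ Fintype.card κ) {w : ι → ℝ} {i : ι} {b C t : ℝ}
    (hw : ∀ u, |u| ≤ b → ∑ j ∈ univ.erase i, (1 - Real.cos (u * w j)) ≤ C * Fintype.card κ)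
    (ht : 0 < t) (hb : 0 ≤ b) (htb : t * b ≤ 1) :
    t * b * Real.exp (-(2 * C)) / 6 ≤
      prUnif fun ω : (ι → κ) × (ι → Bool) => |counterNoise w i ω| ≤ t := by
  have : Nonempty κ := Fintype.card_pos_iff.1 (by lia)
  have four_le_card : (4 : ℝ) ≤ Fintype.card κ := by exact_mod_cast hκ
  have defect_nonneg (x : ℝ) : 0 ≤ (1 - Real.cos x) / Fintype.card κ :=
    div_nonneg (by linarith [Real.cos_le_one x]) (by positivity)
  have defect_le_half (x : ℝ) : (1 - Real.cos x) / Fintype.card κ ≤ 1 / 2 := by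
    rw [div_le_iff₀ (by linarith)]
    linarith [Real.neg_one_le_cos x]
  refine le_prUnif_abs_le ht hb htb (fun u => ?_) (fun u hu => ?_)
  · rw [expect_cos_counterNoise]
    exact prod_nonneg fun j _ => by linarith [defect_le_half (u * w j)]
  · rw [expect_cos_counterNoise]
    refine le_trans (Real.exp_le_exp.2 ?_) (exp_neg_two_mul_sum_le_prod_one_sub
      (fun j _ => defect_nonneg (u * w j)) (fun j _ => defect_le_half (u * w j)))
    rw [← sum_div]
    linarith [(div_le_iff₀ (by linarith)).2 (hw u hu)]

end Counter

section Zipf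

lemma one_sub_cos_le_of_abs_le {x y : ℝ} (hxy : |x| ≤ y) :
    1 - Real.cos x ≤ 9 / 2 * (y / (1 + y)) ^ 2 := by
  have y_nonneg : 0 ≤ y := (abs_nonneg x).trans hxy
  rw [div_pow, ← mul_div_assoc, le_div_iff₀ (by positivity)]
  rcases le_total y 2 with hy | hy
  · have cos_bound : 1 - Real.cos x ≤ y ^ 2 / 2 := by
      linarith [Real.one_sub_sq_div_two_le_cos (x := x),
        sq_le_sq' (abs_le.1 hxy).1 (abs_le.1 hxy).2]
    calc (1 - Real.cos x) * (1 + y) ^ 2 ≤ y ^ 2 / 2 * (1 + 2) ^ 2 := by gcongr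
      _ = 9 / 2 * y ^ 2 := by ring
  · calc (1 - Real.cos x) * (1 + y) ^ 2 ≤ 2 * (y / 2 + y) ^ 2 := by
          gcongr
          · linarith [Real.neg_one_le_cos x]
          · linarith
      _ = 9 / 2 * y ^ 2 := by ring

lemma sum_range_inv_sq_le {B : ℝ} (hB : 0 < B) (n : ℕ) :
    ∑ j ∈ range n, ((j + 1 + B) ^ 2)⁻¹ ≤ B⁻¹ := by
  have telescope := sum_range_sub' (fun j : ℕ => (j + B)⁻¹) n
  calc ∑ j ∈ range n, ((j + 1 + B) ^ 2)⁻¹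
      ≤ ∑ j ∈ range n, (((j : ℝ) + B)⁻¹ - ((j + 1 : ℕ) + B)⁻¹) := by
        gcongr with j
        rw [inv_sub_inv (by positivity) (by positivity), Nat.cast_succ, add_right_comm,
          add_sub_cancel_left, one_div, sq]
        exact inv_anti₀ (by positivity)
          (mul_le_mul_of_nonneg_right (le_add_of_nonneg_right zero_le_one) (by positivity))
    _ ≤ B⁻¹ := by
        rw [telescope, Nat.cast_zero, zero_add, sub_le_self_iff]
        positivity

lemma sum_one_sub_cos_le {n : ℕ} {w : Fin n → ℝ} (hw : ∀ j, |w j| ≤ ((j : ℝ) + 1)⁻¹) {B u : ℝ}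
    (hB : 0 < B) (hu : |u| ≤ B) : ∑ j, (1 - Real.cos (u * w j)) ≤ 9 / 2 * B := by
  have one_sub_cos_le_sq (j : Fin n) :
      1 - Real.cos (u * w j) ≤ 9 / 2 * B ^ 2 * ((j + 1 + B) ^ 2)⁻¹ := by
    have abs_mul_le : |u * w j| ≤ B * ((j : ℝ) + 1)⁻¹ := by
      rw [abs_mul]
      exact mul_le_mul hu (hw j) (abs_nonneg _) hB.le
    refine (one_sub_cos_le_of_abs_le abs_mul_le).trans_eq ?_
    field_simp
  calc ∑ j, (1 - Real.cos (u * w j))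
      ≤ ∑ j : Fin n, 9 / 2 * B ^ 2 * (((j : ℝ) + 1 + B) ^ 2)⁻¹ :=
        sum_le_sum fun j _ => one_sub_cos_le_sq j
    _ = 9 / 2 * B ^ 2 * ∑ j ∈ range n, ((j + 1 + B) ^ 2)⁻¹ := by
        rw [← mul_sum, Fin.sum_univ_eq_sum_range fun j : ℕ => (((j : ℝ) + 1 + B) ^ 2)⁻¹]
    _ ≤ 9 / 2 * B ^ 2 * B⁻¹ := by
        gcongr
        exact sum_range_inv_sq_le hB n
    _ = 9 / 2 * B := by field_simp

end Zipf

theorem countSketch_counter_anticoncentration_general {n B : ℕ} (hB : 4 ≤ B) {w : Fin n → ℝ}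
    (hw : ∀ j, |w j| ≤ ((j : ℝ) + 1)⁻¹) (i : Fin n) {t : ℝ} (ht : 0 < t) (htB : t ≤ 1 / B) :
    Real.exp (-9) / 6 * t * B ≤
      prUnif fun ω : (Fin n → Fin B) × (Fin n → Bool) => |counterNoise w i ω| ≤ t := by
  have B_pos : (0 : ℝ) < B := by exact_mod_cast (by lia : 0 < B)
  have cost_le (u : ℝ) (hu : |u| ≤ B) :
      ∑ j ∈ univ.erase i, (1 - Real.cos (u * w j)) ≤ 9 / 2 * Fintype.card (Fin B) := by
    rw [Fintype.card_fin]
    refine (sum_le_univ_sum_of_nonneg fun j => ?_).trans (sum_one_sub_cos_le hw B_pos hu)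
    linarith [Real.cos_le_one (u * w j)]
  calc Real.exp (-9) / 6 * t * B = t * B * Real.exp (-(2 * (9 / 2))) / 6 := by ring_nf
    _ ≤ prUnif fun ω : (Fin n → Fin B) × (Fin n → Bool) => |counterNoise w i ω| ≤ t :=
      le_prUnif_abs_counterNoise_le (by rwa [Fintype.card_fin]) cost_le ht B_pos.le
        ((le_div_iff₀ B_pos).1 htB)

/-- anti-concentration of the one-row Count-Sketch counter
`X = Σ_{j≠i} 1[h(j)=h(i)]·s(j)/j` on Zipfian input:
`Pr[-t ≤ X ≤ t] ≥ c·t·B` for all `0 < t ≤ 1/(2B)`. -/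
theorem countSketch_counter_anticoncentration :
    ∃ c : ℝ, 0 < c ∧ ∃ B₀ : ℕ,
      ∀ n B : ℕ, B₀ ≤ B → 2 * B ≤ n → ∀ i : Fin n, ∀ t : ℝ,
        0 < t → t ≤ 1 / (2 * (B : ℝ)) →
        c * t * (B : ℝ) ≤
          prUnif (fun ω : (Fin n → Fin B) × (Fin n → Bool) =>
            -t ≤ (∑ j ∈ Finset.univ.erase i,
                    if ω.1 j = ω.1 i then sgn (ω.2 j) * ((j : ℝ) + 1)⁻¹ else 0) ∧
            (∑ j ∈ Finset.univ.erase i,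
                    if ω.1 j = ω.1 i then sgn (ω.2 j) * ((j : ℝ) + 1)⁻¹ else 0) ≤ t) := by
  refine ⟨Real.exp (-9) / 6, by positivity, 4, fun n B hB _ i t ht htB => ?_⟩
  have B_pos : (0 : ℝ) < B := by exact_mod_cast (by lia : 0 < B)
  have t_le : t ≤ 1 / B := htB.trans (one_div_le_one_div_of_le B_pos (by linarith))
  simpa only [abs_le, counterNoise] using countSketch_counter_anticoncentration_general hB
    (fun j => (abs_of_pos (by positivity : (0 : ℝ) < ((j : ℝ) + 1)⁻¹)).le) i ht t_le
end

section
/- There exists an absolute constant c > 0 such that the following holds. Let k ≥ 3 be odd and let n, B_1, B_2 ∈ ℕ satisfy B_2 ≥ B_1 ≥ 1, B_2 ≥ k and n ≥ 2·B_2. Let h_1,...,h_k : {B_1+1,...,n} → {1,...,⌊B_2/k⌋} and s_1,...,s_k : {B_1+1,...,n} → {−1,1} be truly random (all values mutually independent, each h_ℓ(j) uniform on {1,...,⌊B_2/k⌋} and each s_ℓ(j) uniform on {−1,1}). For i ∈ {B_1+1,...,n} define f̃_i = median_{1≤ℓ≤k} s_ℓ(i)·Σ_{j=B_1+1}^n 1[h_ℓ(j)=h_ℓ(i)]·s_ℓ(j)·(1/j).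 Then for every i ∈ {B_1+1,...,n}, E[|f̃_i − 1/i|] ≥ c/B_2. -/
/-- The median of `k` real numbers (for odd `k` this is the usual median). -/
noncomputable def medianFin {k : ℕ} (v : Fin k → ℝ) : ℝ :=
  (List.insertionSort (· ≤ ·) (List.ofFn v)).getD (k / 2) 0

/-- Zipfian frequency of the light item indexed by `j : Fin (n - B₁)`
(representing item `B₁ + j + 1`): `1/(B₁ + j + 1)`. -/
noncomputable def zipfTail (B₁ : ℕ) {m : ℕ} (j : Fin m) : ℝ :=
  ((B₁ : ℝ) + (j : ℝ) + 1)⁻¹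

/-!
In a single row the error at item `i` is symmetric, so it is at least `t = 1 / (B₁ + B₂)` with
probability `p`, where `q = 1 - 2 * p` is the probability that its absolute value is below `t`.
Given the hash function, the Littlewood–Offord inequality of Erdős bounds `q ^ 2` by the
inverse of the number of items of frequency at least `t` in the bucket of `i` (counting `i`). There
are at least `B₂` such items, and as they are exchangeable the expectation of that inverse is at
most the number of buckets over the number of items, so `q ^ 2 ≤ 1 / k`, that is,
`4 * p * (1 - p) ≥ 1 - 1 / k`.

By Cauchy–Schwarz, `k` independent events of probability `p` have a majority occurring with
probability at least `(4 * p * (1 - p)) ^ k / 4 ≥ (1 - 1 / k) ^ k / 4 ≥ 1 / 16`, and when a majority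
of the rows overestimate by at least `t`, so does the median.
-/

open Finset
open scoped BigOperators

section Probability

variable {Ω Ω' α β : Type*} [Fintype Ω] [Fintype Ω'] [Fintype α] [Fintype β]

/-- Probability of the event `p` under the uniform distribution on a finite space. Being defined
through `expUnif`, it takes the junk value `0` on the empty space. -/
noncomputable def probUnif (p : Ω → Prop) : ℝ :=
  expUnif (Set.indicator {ω | p ω} 1)

lemma expUnif_eq_expect (X : Ω → ℝ) : expUnif X = 𝔼 ω, X ω :=
  (Fintype.expect_eq_sum_div_card X).symm

lemma expUnif_nonneg {X : Ω → ℝ} (hX : ∀ ω, 0 ≤ X ω) : 0 ≤ expUnif X :=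
  div_nonneg (sum_nonneg fun ω _ => hX ω) (Nat.cast_nonneg _)

lemma expUnif_mono {X Y : Ω → ℝ} (hXY : ∀ ω, X ω ≤ Y ω) : expUnif X ≤ expUnif Y := by
  simp only [expUnif_eq_expect]
  exact expect_le_expect fun ω _ => hXY ω

lemma expUnif_const [Nonempty Ω] (c : ℝ) : expUnif (fun _ : Ω => c) = c := by
  rw [expUnif_eq_expect, Fintype.expect_const]

lemma expUnif_le [Nonempty Ω] {X : Ω → ℝ} {c : ℝ} (hX : ∀ ω, X ω ≤ c) : expUnif X ≤ c :=
  (expUnif_mono hX).trans_eq (expUnif_const c)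

lemma expUnif_mul_const (X : Ω → ℝ) (c : ℝ) :
    expUnif (fun ω => X ω * c) = expUnif X * c := by
  simp only [expUnif_eq_expect, expect_mul]

lemma expUnif_comp_equiv (e : Ω ≃ Ω') (X : Ω' → ℝ) : expUnif (fun ω => X (e ω)) = expUnif X := by
  simp only [expUnif_eq_expect]
  exact Fintype.expect_equiv e _ _ fun _ => rfl

lemma expUnif_prod (X : α × β → ℝ) :
    expUnif X = expUnif fun a => expUnif fun b => X (a, b) := by
  simp only [expUnif_eq_expect, ← univ_product_univ, expect_product]

lemma expUnif_sq_le (X : Ω → ℝ) : expUnif X ^ 2 ≤ expUnif fun ω => X ω ^ 2 := by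
  rcases isEmpty_or_nonempty Ω with _ | _
  · simp [expUnif]
  · simpa [expUnif_eq_expect] using expect_mul_sq_le_sq_mul_sq univ X 1

lemma probUnif_eq_card_div_card (p : Ω → Prop) [DecidablePred p] :
    probUnif p = #{ω | p ω} / Fintype.card Ω := by
  simp [probUnif, expUnif, Set.indicator_apply]

lemma probUnif_nonneg (p : Ω → Prop) : 0 ≤ probUnif p :=
  expUnif_nonneg fun _ => Set.indicator_nonneg (fun _ _ => zero_le_one) _

lemma probUnif_mono {p q : Ω → Prop} (hpq : ∀ ω, p ω → q ω) : probUnif p ≤ probUnif q :=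
  expUnif_mono fun ω => Set.indicator_le_indicator_of_subset hpq (fun _ => zero_le_one) ω

lemma probUnif_comp_equiv (e : Ω ≃ Ω') (p : Ω' → Prop) :
    probUnif (fun ω => p (e ω)) = probUnif p :=
  expUnif_comp_equiv e (Set.indicator {ω | p ω} 1)

lemma probUnif_prod (p : α × β → Prop) :
    probUnif p = expUnif fun a => probUnif fun b => p (a, b) :=
  expUnif_prod _

lemma probUnif_not [Nonempty Ω] (p : Ω → Prop) : probUnif (fun ω => ¬ p ω) = 1 - probUnif p := by
  classical
  have hcard : (Fintype.card Ω : ℝ) ≠ 0 := by positivity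
  rw [probUnif_eq_card_div_card, probUnif_eq_card_div_card, eq_sub_iff_add_eq, ← add_div,
    div_eq_one_iff_eq hcard, ← Nat.cast_add, add_comm, card_filter_add_card_filter_not, card_univ]

lemma probUnif_mem_eq_sum {γ : Type*} (f : Ω → γ) (M : Finset γ) :
    probUnif (fun ω => f ω ∈ M) = ∑ c ∈ M, probUnif fun ω => f ω = c := by
  classical
  simp only [probUnif_eq_card_div_card, ← sum_div, ← Nat.cast_sum]
  rw [card_eq_sum_card_fiberwise (f := f) (t := M) fun ω hω => by simpa using hω]
  congr 2
  refine sum_congr rfl fun c hc => congrArg card ?_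
  ext ω
  simp only [mem_filter, mem_univ, true_and, and_iff_right_iff_imp]
  rintro rfl
  exact hc

lemma probUnif_forall {κ : Type*} [Fintype κ] [DecidableEq κ] (p : κ → Ω → Prop) :
    probUnif (fun ω : κ → Ω => ∀ l, p l (ω l)) = ∏ l, probUnif (p l) := by
  classical
  have hpi : ({ω : κ → Ω | ∀ l, p l (ω l)} : Finset _)
      = Fintype.piFinset fun l => {x | p l x} := by
    ext ω
    simp
  simp [probUnif_eq_card_div_card, hpi, prod_div_distrib]

lemma mul_probUnif_le_expUnif {X : Ω → ℝ} (hX : ∀ ω, 0 ≤ X ω) (t : ℝ) :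
    t * probUnif (fun ω => t ≤ X ω) ≤ expUnif X := by
  rw [mul_comm, probUnif, ← expUnif_mul_const]
  refine expUnif_mono fun ω => ?_
  by_cases hω : t ≤ X ω <;> simp [hω, hX ω]

lemma two_mul_probUnif_le_add_probUnif_abs_lt_eq_one [Nonempty Ω] {X : Ω → ℝ} (σ : Ω ≃ Ω)
    (hσ : ∀ ω, X (σ ω) = -X ω) {t : ℝ} (ht : 0 < t) :
    2 * probUnif (fun ω => t ≤ X ω) + probUnif (fun ω => |X ω| < t) = 1 := by
  classical
  have hneg : probUnif (fun ω => t ≤ X ω) = probUnif fun ω => t ≤ -X ω := by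
    simpa only [hσ] using (probUnif_comp_equiv σ fun ω => t ≤ X ω).symm
  have habs : probUnif (fun ω => ¬ |X ω| < t)
      = probUnif (fun ω => t ≤ X ω) + probUnif fun ω => t ≤ -X ω := by
    have hdisj : Disjoint ({ω | t ≤ X ω} : Finset Ω) ({ω | t ≤ -X ω} : Finset Ω) :=
      disjoint_filter.2 fun ω _ h h' => by linarith
    simp only [probUnif_eq_card_div_card, not_lt, le_abs, filter_or, card_union_of_disjoint hdisj,
      Nat.cast_add, add_div]
  rw [probUnif_not] at habs
  linarith

end Probability

section Median

lemma countP_le_length_sub_of_getElem_lt {α : Type*} [LinearOrder α] {L : List α}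
    (hL : L.Pairwise (· ≤ ·)) {m : ℕ} (hm : m < L.length) {x : α} (hx : L[m] < x) :
    L.countP (x ≤ ·) ≤ L.length - (m + 1) := by
  have htake : (L.take (m + 1)).countP (x ≤ ·) = 0 := by
    refine List.countP_eq_zero.2 fun a ha => ?_
    obtain ⟨j, hj, rfl⟩ := List.mem_take_iff_getElem.1 ha
    have hjm : L[j] ≤ L[m] := hL.sortedLE.getElem_le_getElem_of_le (by lia)
    simpa using hjm.trans_lt hx
  calc L.countP (x ≤ ·) = (L.take (m + 1) ++ L.drop (m + 1)).countP (x ≤ ·) := by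
        rw [List.take_append_drop]
    _ = (L.drop (m + 1)).countP (x ≤ ·) := by rw [List.countP_append, htake, zero_add]
    _ ≤ (L.drop (m + 1)).length := List.countP_le_length
    _ = L.length - (m + 1) := List.length_drop

lemma countP_ofFn_eq_card {α : Type*} {k : ℕ} (v : Fin k → α) (p : α → Prop) [DecidablePred p] :
    (List.ofFn v).countP p = #{l | p (v l)} := by
  rw [List.ofFn_eq_map, List.countP_map, ← List.toFinset_finRange,
    (List.nodup_finRange k).card_eq_countP]
  rfl

lemma le_medianFin {k : ℕ} (hk : 0 < k) {v : Fin k → ℝ} {x : ℝ}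
    (hx : k ≤ 2 * #{l | x ≤ v l}) : x ≤ medianFin v := by
  set L := (List.ofFn v).insertionSort (· ≤ ·) with hL
  have hlen : L.length = k := by simp [hL]
  have hmid : k / 2 < L.length := by lia
  have hcount : L.countP (x ≤ ·) = #{l | x ≤ v l} := by
    rw [(List.perm_insertionSort _ _).countP_eq, countP_ofFn_eq_card]
  rw [medianFin, List.getD_eq_getElem _ _ hmid]
  by_contra! hlt
  have := countP_le_length_sub_of_getElem_lt (List.pairwise_insertionSort _ _) hmid hlt
  lia

end Median

section Binomial

lemma centralBinom_sq_mul_le (n : ℕ) : n.centralBinom ^ 2 * (2 * n + 1) ≤ 16 ^ n := by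
  induction n with
  | zero => simp
  | succ n ih =>
    have hrec := n.succ_mul_centralBinom_succ
    refine Nat.le_of_mul_le_mul_left ?_ (show 0 < (n + 1) ^ 2 by positivity)
    calc (n + 1) ^ 2 * ((n + 1).centralBinom ^ 2 * (2 * (n + 1) + 1))
        = ((n + 1) * (n + 1).centralBinom) ^ 2 * (2 * n + 3) := by ring
      _ = (n.centralBinom ^ 2 * (2 * n + 1)) * (4 * (2 * n + 1) * (2 * n + 3)) := by
          rw [hrec]; ring
      _ ≤ 16 ^ n * (16 * (n + 1) ^ 2) := Nat.mul_le_mul ih (by lia)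
      _ = (n + 1) ^ 2 * 16 ^ (n + 1) := by ring

lemma choose_half_sq_mul_le (n : ℕ) : n.choose (n / 2) ^ 2 * (n + 1) ≤ 4 ^ n := by
  rcases n.even_or_odd' with ⟨m, rfl | rfl⟩
  · simpa [Nat.centralBinom, pow_mul] using centralBinom_sq_mul_le m
  · have hhalf : (2 * m + 1) / 2 = m := by lia
    have hcentral : (m + 1).centralBinom = 2 * (2 * m + 1).choose m := by
      rw [Nat.centralBinom, mul_add_one, Nat.choose_succ_succ, Nat.choose_symm_half, ← two_mul]
    have hbound := centralBinom_sq_mul_le (m + 1)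
    rw [hcentral] at hbound
    rw [hhalf]
    have hpow : 16 ^ (m + 1) = 4 * 4 ^ (2 * m + 1) := by
      rw [pow_succ 4, pow_mul, pow_succ]; norm_num; ring
    nlinarith [sq_nonneg ((2 * m + 1).choose m)]

end Binomial

section LittlewoodOfford

variable {τ : Type*} [Fintype τ]

lemma sgn_mono : Monotone sgn := by
  intro b b' hbb'
  cases b <;> cases b' <;> first | exact absurd hbb' (by decide) | norm_num [sgn]

lemma card_le_choose_half_of_isAntichain {𝒜 : Finset (τ → Bool)}
    (h𝒜 : IsAntichain (· ≤ ·) (𝒜 : Set (τ → Bool))) :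
    #𝒜 ≤ (Fintype.card τ).choose (Fintype.card τ / 2) := by
  let support (s : τ → Bool) : Finset τ := {j | s j = true}
  have hsupport (s s' : τ → Bool) : support s ⊆ support s' ↔ s ≤ s' := by
    simp [support, subset_iff, Pi.le_def, Bool.le_iff_imp]
  have hinj : Function.Injective support := fun s s' hss' =>
    le_antisymm ((hsupport s s').1 hss'.subset) ((hsupport s' s).1 hss'.symm.subset)
  have hanti : IsAntichain (· ⊆ ·) (𝒜.map ⟨support, hinj⟩ : Set (Finset τ)) := by
    rw [coe_map]
    exact h𝒜.image support fun _ _ hss' => (hsupport _ _).1 hss'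
  simpa using hanti.sperner

lemma sum_sgn_mul_add_two_mul_le {a : τ → ℝ} {t : ℝ} (ht : 0 ≤ t) (ha : ∀ j, t ≤ a j)
    {s s' : τ → Bool} (hss' : s < s') :
    ∑ j, sgn (s j) * a j + 2 * t ≤ ∑ j, sgn (s' j) * a j := by
  obtain ⟨hle, j₀, hj₀⟩ := Pi.lt_def.1 hss'
  have hmono (j : τ) : 0 ≤ (sgn (s' j) - sgn (s j)) * a j :=
    mul_nonneg (sub_nonneg.2 (sgn_mono (hle j))) (ht.trans (ha j))
  have hjump : sgn (s' j₀) - sgn (s j₀) = 2 := by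
    obtain ⟨hs, hs'⟩ := Bool.lt_iff.1 hj₀
    norm_num [hs, hs', sgn]
  have hsum : 2 * a j₀ ≤ ∑ j, (sgn (s' j) - sgn (s j)) * a j := by
    rw [← hjump]
    exact single_le_sum (fun j _ => hmono j) (mem_univ j₀)
  simp only [sub_mul, sum_sub_distrib] at hsum
  linarith [ha j₀]

-- Erdős: sign patterns whose sums lie in a common open interval of length `2t` form an antichain.
lemma card_abs_add_sum_sgn_lt_le_choose_half [DecidableEq τ] {a : τ → ℝ} {t : ℝ} (ht : 0 ≤ t)
    (ha : ∀ j, t ≤ a j) (c : ℝ) :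
    #{s : τ → Bool | |c + ∑ j, sgn (s j) * a j| < t}
      ≤ (Fintype.card τ).choose (Fintype.card τ / 2) := by
  refine card_le_choose_half_of_isAntichain fun s hs s' hs' hne hle => ?_
  have hgap := sum_sgn_mul_add_two_mul_le ht ha (lt_of_le_of_ne hle hne)
  simp only [mem_coe, mem_filter_univ, abs_lt] at hs hs'
  linarith

lemma probUnif_abs_add_sum_sgn_lt_sq_le [DecidableEq τ] {a : τ → ℝ} {t : ℝ} (ht : 0 ≤ t)
    (ha : ∀ j, t ≤ a j) (c : ℝ) :
    probUnif (fun s : τ → Bool => |c + ∑ j, sgn (s j) * a j| < t) ^ 2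
      ≤ ((Fintype.card τ : ℝ) + 1)⁻¹ := by
  have hchoose : (((Fintype.card τ).choose (Fintype.card τ / 2) : ℕ) : ℝ) ^ 2
      * (Fintype.card τ + 1) ≤ 4 ^ Fintype.card τ := mod_cast choose_half_sq_mul_le _
  have hcard : (Fintype.card (τ → Bool) : ℝ) ^ 2 = 4 ^ Fintype.card τ := by
    rw [Fintype.card_fun, Fintype.card_bool, Nat.cast_pow, pow_right_comm]
    norm_num
  rw [probUnif_eq_card_div_card, div_pow, hcard, div_le_iff₀ (by positivity), inv_mul_eq_div,
    le_div_iff₀ (by positivity)]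
  refine le_trans ?_ hchoose
  gcongr
  exact card_abs_add_sum_sgn_lt_le_choose_half ht ha c

/-- Coordinates outside `T` may carry arbitrary weights, as one may condition on them. -/
lemma probUnif_abs_sum_sgn_lt_sq_le {ι : Type*} [Fintype ι] [DecidableEq ι] {C T : Finset ι}
    (hTC : T ⊆ C) {z : ι → ℝ} {t : ℝ} (ht : 0 ≤ t) (hz : ∀ j ∈ T, t ≤ z j) :
    probUnif (fun s : ι → Bool => |∑ j ∈ C, sgn (s j) * z j| < t) ^ 2 ≤ ((#T : ℝ) + 1)⁻¹ := by
  let e : ({j // j ∉ T} → Bool) × (T → Bool) ≃ (ι → Bool) :=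
    (Equiv.prodComm _ _).trans (Equiv.piEquivPiSubtypeProd (· ∈ T) fun _ => Bool).symm
  let c (y : {j // j ∉ T} → Bool) : ℝ := ∑ j ∈ C \ T, sgn (e (y, fun _ => false) j) * z j
  have hsplit (y : {j // j ∉ T} → Bool) (x : T → Bool) :
      ∑ j ∈ C, sgn (e (y, x) j) * z j = c y + ∑ j : T, sgn (x j) * z j := by
    rw [← sum_sdiff hTC, ← sum_coe_sort T]
    congr 1
    · refine sum_congr rfl fun j hj => ?_
      simp [e, (mem_sdiff.1 hj).2]
    · simp [e]
  rw [← probUnif_comp_equiv e, probUnif_prod]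
  simp only [hsplit]
  refine (expUnif_sq_le _).trans (expUnif_le fun y => ?_)
  simpa using probUnif_abs_add_sum_sgn_lt_sq_le ht (fun j : T => hz j j.2) (c y)

end LittlewoodOfford

section Collisions

variable {ι β : Type*} [DecidableEq β]

lemma sum_inv_card_filter_eq_le [Fintype β] (J : Finset ι) (h : ι → β) :
    ∑ i ∈ J, (#{j ∈ J | h j = h i} : ℝ)⁻¹ ≤ Fintype.card β := by
  rw [← sum_fiberwise J h]
  calc ∑ y, ∑ i ∈ J with h i = y, (#{j ∈ J | h j = h i} : ℝ)⁻¹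
      = ∑ y, ∑ i ∈ J with h i = y, (#{j ∈ J | h j = y} : ℝ)⁻¹ := by
        refine sum_congr rfl fun y _ => sum_congr rfl fun i hi => ?_
        rw [(mem_filter.1 hi).2]
    _ ≤ ∑ _y : β, (1 : ℝ) := by
        refine sum_le_sum fun y _ => ?_
        rw [sum_const, nsmul_eq_mul]
        exact mul_inv_le_one
    _ = Fintype.card β := by simp

variable [Fintype ι] [Fintype β] [DecidableEq ι]

lemma expUnif_inv_card_filter_eq_congr {J : Finset ι} {i i' : ι} (hi : i ∈ J) (hi' : i' ∈ J) :
    expUnif (fun h : ι → β => (#{j ∈ J | h j = h i} : ℝ)⁻¹)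
      = expUnif fun h : ι → β => (#{j ∈ J | h j = h i'} : ℝ)⁻¹ := by
  let σ := Equiv.swap i i'
  have hσJ (j : ι) : σ j ∈ J ↔ j ∈ J := by
    simp only [σ, Equiv.swap_apply_def]
    split_ifs with h h' <;> simp [*]
  rw [← expUnif_comp_equiv (σ.arrowCongr (Equiv.refl β))]
  refine congrArg expUnif (funext fun h => ?_)
  have hcard : #{j ∈ J | h (σ j) = h (σ i)} = #{j ∈ J | h j = h i'} :=
    card_equiv σ fun j => by simp [hσJ, σ]
  simpa [Equiv.arrowCongr_apply, σ] using congrArg (fun m : ℕ => (m : ℝ)⁻¹) hcard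

lemma expUnif_inv_card_filter_eq_le [Nonempty β] {J : Finset ι} {i : ι} (hi : i ∈ J) :
    expUnif (fun h : ι → β => (#{j ∈ J | h j = h i} : ℝ)⁻¹) ≤ Fintype.card β / #J := by
  have hJ : (0 : ℝ) < #J := mod_cast card_pos.2 ⟨i, hi⟩
  rw [le_div_iff₀' hJ]
  calc (#J : ℝ) * expUnif (fun h : ι → β => (#{j ∈ J | h j = h i} : ℝ)⁻¹)
      = ∑ i' ∈ J, expUnif fun h : ι → β => (#{j ∈ J | h j = h i'} : ℝ)⁻¹ := by
        rw [← nsmul_eq_mul, ← sum_const]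
        exact sum_congr rfl fun i' hi' => expUnif_inv_card_filter_eq_congr hi hi'
    _ = expUnif fun h : ι → β => ∑ i' ∈ J, (#{j ∈ J | h j = h i'} : ℝ)⁻¹ := by
        simp only [expUnif_eq_expect, expect_sum_comm]
    _ ≤ Fintype.card β := expUnif_le fun h => sum_inv_card_filter_eq_le J h

end Collisions

section Row

variable {ι β : Type*} [Fintype ι] [DecidableEq β]

/-- Count-Sketch estimate of the frequency of item `i` from a single row with hash function `h`
and sign function `s`, for the frequency vector `z`. -/
noncomputable def rowEstimate (z : ι → ℝ) (h : ι → β) (s : ι → Bool) (i : ι) : ℝ :=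
  sgn (s i) * ∑ j, if h j = h i then sgn (s j) * z j else 0

variable [DecidableEq ι]

/-- Signed mass of the other items in the bucket of `i`. The error of `rowEstimate` is this
quantity times the sign of `i`, a factor left out to make it independent of `s i`. -/
noncomputable def rowNoise (z : ι → ℝ) (h : ι → β) (s : ι → Bool) (i : ι) : ℝ :=
  ∑ j with j ≠ i ∧ h j = h i, sgn (s j) * z j

lemma sgn_not (b : Bool) : sgn (!b) = -sgn b := by cases b <;> simp [sgn]

lemma sgn_mul_self (b : Bool) : sgn b * sgn b = 1 := by cases b <;> simp [sgn]

lemma abs_sgn (b : Bool) : |sgn b| = 1 := by cases b <;> simp [sgn]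

lemma rowEstimate_eq_add (z : ι → ℝ) (h : ι → β) (s : ι → Bool) (i : ι) :
    rowEstimate z h s i = z i + sgn (s i) * rowNoise z h s i := by
  have hbucket : ({j | h j = h i} : Finset ι) =
      insert i ({j | j ≠ i ∧ h j = h i} : Finset ι) := by
    ext j
    by_cases hj : j = i <;> simp [hj]
  rw [rowEstimate, rowNoise, ← sum_filter, hbucket, sum_insert (by simp), mul_add, ← mul_assoc,
    sgn_mul_self, one_mul]

lemma rowNoise_update (z : ι → ℝ) (h : ι → β) (s : ι → Bool) (i : ι) (b : Bool) :
    rowNoise z h (Function.update s i b) i = rowNoise z h s i :=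
  sum_congr rfl fun j hj => by rw [Function.update_of_ne (mem_filter.1 hj).2.1]

lemma probUnif_abs_rowNoise_lt_sq_le_inv_card {J : Finset ι} {i : ι} (hi : i ∈ J) {z : ι → ℝ}
    {t : ℝ} (ht : 0 ≤ t) (hz : ∀ j ∈ J, j ≠ i → t ≤ z j) (h : ι → β) :
    probUnif (fun s => |rowNoise z h s i| < t) ^ 2 ≤ (#{j ∈ J | h j = h i} : ℝ)⁻¹ := by
  have hbucket : ({j ∈ J | h j = h i} : Finset ι) = insert i {j ∈ J | j ≠ i ∧ h j = h i} := by
    ext j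
    by_cases hj : j = i <;> simp [hj, hi]
  rw [hbucket, card_insert_of_notMem (by simp), Nat.cast_add_one]
  refine probUnif_abs_sum_sgn_lt_sq_le (filter_subset_filter _ (subset_univ J)) ht fun j hj => ?_
  obtain ⟨hjJ, hji, -⟩ := mem_filter.1 hj
  exact hz j hjJ hji

variable [Fintype β] [Nonempty β]

lemma probUnif_abs_rowNoise_lt_sq_le {J : Finset ι} {i : ι} (hi : i ∈ J) {z : ι → ℝ}
    {t : ℝ} (ht : 0 ≤ t) (hz : ∀ j ∈ J, j ≠ i → t ≤ z j) :
    probUnif (fun r : (ι → β) × (ι → Bool) => |rowNoise z r.1 r.2 i| < t) ^ 2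
      ≤ Fintype.card β / #J := by
  rw [probUnif_prod]
  calc expUnif (fun h : ι → β => probUnif fun s => |rowNoise z h s i| < t) ^ 2
      ≤ expUnif fun h : ι → β => probUnif (fun s => |rowNoise z h s i| < t) ^ 2 :=
        expUnif_sq_le _
    _ ≤ expUnif fun h : ι → β => (#{j ∈ J | h j = h i} : ℝ)⁻¹ :=
        expUnif_mono fun h => probUnif_abs_rowNoise_lt_sq_le_inv_card hi ht hz h
    _ ≤ Fintype.card β / #J := expUnif_inv_card_filter_eq_le hi

lemma two_mul_probUnif_le_add_probUnif_abs_rowNoise_lt_eq_one (z : ι → ℝ) (i : ι)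
    {t : ℝ} (ht : 0 < t) :
    2 * probUnif (fun r : (ι → β) × (ι → Bool) => t ≤ sgn (r.2 i) * rowNoise z r.1 r.2 i)
      + probUnif (fun r : (ι → β) × (ι → Bool) => |rowNoise z r.1 r.2 i| < t) = 1 := by
  have hflip : Function.Involutive fun s : ι → Bool => Function.update s i (!s i) :=
    fun s => by simp
  have hneg (r : (ι → β) × (ι → Bool)) :
      sgn (Function.update r.2 i (!r.2 i) i) *
        rowNoise z r.1 (Function.update r.2 i (!r.2 i)) i
      = -(sgn (r.2 i) * rowNoise z r.1 r.2 i) := by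
    rw [rowNoise_update, Function.update_self, sgn_not, neg_mul]
  simpa only [abs_mul, abs_sgn, one_mul] using two_mul_probUnif_le_add_probUnif_abs_lt_eq_one
    (X := fun r : (ι → β) × (ι → Bool) => sgn (r.2 i) * rowNoise z r.1 r.2 i)
    ((Equiv.refl (ι → β)).prodCongr hflip.toPerm) hneg ht

end Row

section Majority

variable {κ : Type*} [Fintype κ]

lemma two_pow_card_le_two_mul_card_majority :
    2 ^ Fintype.card κ ≤ 2 * #{S : Finset κ | Fintype.card κ ≤ 2 * #S} := by
  classical
  have hcompl : #{S : Finset κ | ¬ Fintype.card κ ≤ 2 * #S}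
      ≤ #{S : Finset κ | Fintype.card κ ≤ 2 * #S} := by
    refine card_le_card_of_injOn compl (fun S hS => ?_) compl_injective.injOn
    simp only [mem_coe, mem_filter_univ, card_compl] at hS ⊢
    lia
  have hsum := card_filter_add_card_filter_not (s := univ)
    fun S : Finset κ => Fintype.card κ ≤ 2 * #S
  rw [card_univ, Fintype.card_finset] at hsum
  lia

variable [DecidableEq κ]

/-- Cauchy–Schwarz, pairing the weight of each majority set with that of its complement. -/
lemma four_mul_pow_card_le_mul_sum_majority {a b : ℝ} (ha : 0 ≤ a) (hb : 0 ≤ b) :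
    (4 * (a * b)) ^ Fintype.card κ ≤ 4 * (a + b) ^ Fintype.card κ *
      ∑ S : Finset κ with Fintype.card κ ≤ 2 * #S, a ^ #S * b ^ #Sᶜ := by
  set k := Fintype.card κ
  set M : Finset (Finset κ) := {S | k ≤ 2 * #S}
  have hM : (2 : ℝ) ^ k ≤ 2 * #M := mod_cast two_pow_card_le_two_mul_card_majority
  have hweight (S : Finset κ) : (a * b) ^ k = a ^ #S * b ^ #Sᶜ * (a ^ #Sᶜ * b ^ #S) := by
    rw [show k = #S + #Sᶜ from (card_add_card_compl S).symm]
    ring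
  have hcs : (#M * √((a * b) ^ k)) ^ 2
      ≤ (∑ S ∈ M, a ^ #S * b ^ #Sᶜ) * ∑ S ∈ M, a ^ #Sᶜ * b ^ #S := by
    rw [← nsmul_eq_mul, ← sum_const]
    refine sum_sq_le_sum_mul_sum_of_sq_le_mul M (fun S _ => by positivity)
      (fun S _ => by positivity) fun S _ => ?_
    rw [Real.sq_sqrt (by positivity), hweight S]
  have htotal : ∑ S ∈ M, a ^ #Sᶜ * b ^ #S ≤ (a + b) ^ k :=
    calc ∑ S ∈ M, a ^ #Sᶜ * b ^ #S ≤ ∑ S : Finset κ, a ^ #Sᶜ * b ^ #S :=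
          sum_le_univ_sum_of_nonneg fun S => by positivity
      _ = (a + b) ^ k := by
          simp only [card_compl, mul_comm (a ^ _), add_comm a,
            Fintype.sum_pow_mul_eq_add_pow, k]
  calc (4 * (a * b)) ^ k = (2 ^ k) ^ 2 * (a * b) ^ k := by
        rw [mul_pow, pow_right_comm]; norm_num
    _ ≤ (2 * #M) ^ 2 * (a * b) ^ k := by gcongr
    _ = 4 * (#M * √((a * b) ^ k)) ^ 2 := by
        rw [mul_pow (#M : ℝ), Real.sq_sqrt (by positivity)]; ring
    _ ≤ 4 * ((∑ S ∈ M, a ^ #S * b ^ #Sᶜ) * (a + b) ^ k) := by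
        gcongr
        exact hcs.trans (by gcongr)
    _ = 4 * (a + b) ^ k * ∑ S ∈ M, a ^ #S * b ^ #Sᶜ := by ring

variable {R : Type*} [Fintype R] [Nonempty R]

lemma probUnif_filter_eq (p : R → Prop) [DecidablePred p] (S : Finset κ) :
    probUnif (fun ω : κ → R => ({l | p (ω l)} : Finset κ) = S)
      = probUnif p ^ #S * (1 - probUnif p) ^ #Sᶜ := by
  have hcoord (l : κ) :
      probUnif (fun x => p x ↔ l ∈ S) = if l ∈ S then probUnif p else 1 - probUnif p := by
    split_ifs with hl <;> simp [hl, probUnif_not]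
  simp only [Finset.ext_iff, mem_filter_univ]
  rw [probUnif_forall fun l x => (p x ↔ l ∈ S)]
  simp only [hcoord, prod_ite, prod_const, filter_mem_eq_inter, univ_inter, filter_notMem_eq_sdiff,
    compl_eq_univ_sdiff]

lemma four_mul_pow_card_le_probUnif_majority (p : R → Prop) [DecidablePred p] :
    (4 * (probUnif p * (1 - probUnif p))) ^ Fintype.card κ / 4
      ≤ probUnif fun ω : κ → R => Fintype.card κ ≤ 2 * #{l | p (ω l)} := by
  have hnot : 0 ≤ 1 - probUnif p := probUnif_not p ▸ probUnif_nonneg _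
  have hsum := four_mul_pow_card_le_mul_sum_majority (κ := κ) (probUnif_nonneg p) hnot
  have hmajority := probUnif_mem_eq_sum (fun ω : κ → R => ({l | p (ω l)} : Finset κ))
    {S | Fintype.card κ ≤ 2 * #S}
  simp only [mem_filter_univ, probUnif_filter_eq] at hmajority
  rw [add_sub_cancel, one_pow, mul_one, ← hmajority] at hsum
  linarith

end Majority

section CountSketch

lemma quarter_le_one_sub_inv_pow {k : ℕ} (hk : 2 ≤ k) : 1 / 4 ≤ (1 - (k : ℝ)⁻¹) ^ k := by
  have hk' : (2 : ℝ) ≤ k := mod_cast hk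
  have hinv : (k : ℝ)⁻¹ ≤ 1 := inv_le_one_of_one_le₀ (by linarith)
  have hbernoulli := one_add_mul_self_le_rpow_one_add (neg_le_neg hinv)
    (show (1 : ℝ) ≤ k / 2 by linarith)
  have hhalf : (1 : ℝ) + k / 2 * -(k : ℝ)⁻¹ = 1 / 2 := by field_simp; norm_num
  rw [hhalf, ← sub_eq_add_neg] at hbernoulli
  calc (1 / 4 : ℝ) = (1 / 2) ^ 2 := by norm_num
    _ ≤ ((1 - (k : ℝ)⁻¹) ^ ((k : ℝ) / 2)) ^ 2 := by gcongr
    _ = (1 - (k : ℝ)⁻¹) ^ k := by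
        rw [← Real.rpow_mul_natCast (by linarith), Nat.cast_ofNat, div_mul_cancel₀ _ two_ne_zero,
          Real.rpow_natCast]

variable {ι β : Type*} [Fintype ι] [DecidableEq ι] [DecidableEq β]
  {k : ℕ} {J : Finset ι} {i : ι} {z : ι → ℝ} {t : ℝ}

lemma le_abs_medianFin_rowEstimate_sub (hk : 0 < k) {ω : Fin k → (ι → β) × (ι → Bool)}
    (hω : k ≤ 2 * #{l | t ≤ sgn ((ω l).2 i) * rowNoise z (ω l).1 (ω l).2 i}) :
    t ≤ |medianFin (fun l => rowEstimate z (ω l).1 (ω l).2 i) - z i| := by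
  refine le_trans (le_sub_iff_add_le'.2 (le_medianFin hk ?_)) (le_abs_self _)
  simpa only [rowEstimate_eq_add, add_le_add_iff_left] using hω

variable [Fintype β] [Nonempty β]

lemma sixteenth_le_probUnif_majority_rowNoise (hk : 2 ≤ k) (hJ : Fintype.card β * k ≤ #J)
    (hi : i ∈ J) (ht : 0 < t) (hz : ∀ j ∈ J, j ≠ i → t ≤ z j) :
    1 / 16 ≤ probUnif fun ω : Fin k → (ι → β) × (ι → Bool) =>
      k ≤ 2 * #{l | t ≤ sgn ((ω l).2 i) * rowNoise z (ω l).1 (ω l).2 i} := by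
  have hk0 : (0 : ℝ) < k := mod_cast two_pos.trans_le hk
  have hJ0 : (0 : ℝ) < #J := mod_cast card_pos.2 ⟨i, hi⟩
  have hJ' : (Fintype.card β : ℝ) * k ≤ #J := mod_cast hJ
  have hsmall := probUnif_abs_rowNoise_lt_sq_le (β := β) hi ht.le hz
  have hsymm := two_mul_probUnif_le_add_probUnif_abs_rowNoise_lt_eq_one (β := β) z i ht
  have hmajority := four_mul_pow_card_le_probUnif_majority (κ := Fin k)
    fun r : (ι → β) × (ι → Bool) => t ≤ sgn (r.2 i) * rowNoise z r.1 r.2 i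
  rw [Fintype.card_fin] at hmajority
  set p := probUnif fun r : (ι → β) × (ι → Bool) => t ≤ sgn (r.2 i) * rowNoise z r.1 r.2 i
  set q := probUnif fun r : (ι → β) × (ι → Bool) => |rowNoise z r.1 r.2 i| < t
  have hinv : Fintype.card β / (#J : ℝ) ≤ (k : ℝ)⁻¹ := by
    rwa [div_le_iff₀ hJ0, inv_mul_eq_div, le_div_iff₀ hk0]
  have hvar : 1 - (k : ℝ)⁻¹ ≤ 4 * (p * (1 - p)) :=
    calc 1 - (k : ℝ)⁻¹ ≤ 1 - q ^ 2 := by linarith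
      _ = 4 * (p * (1 - p)) := by rw [eq_sub_of_add_eq' hsymm]; ring
  have hpow : (1 - (k : ℝ)⁻¹) ^ k ≤ (4 * (p * (1 - p))) ^ k :=
    pow_le_pow_left₀ (sub_nonneg.2 (Nat.cast_inv_le_one k)) hvar k
  linarith [quarter_le_one_sub_inv_pow hk]

lemma div_sixteen_le_expUnif_abs_medianFin_sub (hk : 2 ≤ k) (hJ : Fintype.card β * k ≤ #J)
    (hi : i ∈ J) (ht : 0 < t) (hz : ∀ j ∈ J, j ≠ i → t ≤ z j) :
    t / 16 ≤ expUnif fun ω : (Fin k → ι → β) × (Fin k → ι → Bool) =>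
      |medianFin (fun l => rowEstimate z (ω.1 l) (ω.2 l) i) - z i| := by
  rw [← expUnif_comp_equiv (Equiv.arrowProdEquivProdArrow (Fin k) (fun _ => ι → β)
    fun _ => ι → Bool)]
  refine le_trans ?_ (mul_probUnif_le_expUnif (fun _ => abs_nonneg _) t)
  rw [div_eq_mul_one_div]
  gcongr
  exact (sixteenth_le_probUnif_majority_rowNoise hk hJ hi ht hz).trans
    (probUnif_mono fun ω hω => le_abs_medianFin_rowEstimate_sub (by lia) hω)

end CountSketch

section Zipf

lemma inv_add_le_zipfTail (B₁ : ℕ) {B₂ m : ℕ} {j : Fin m} (hj : (j : ℕ) < B₂) :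
    ((B₁ : ℝ) + B₂)⁻¹ ≤ zipfTail B₁ j := by
  have hj' : (j : ℝ) + 1 ≤ B₂ := mod_cast hj
  exact inv_anti₀ (by positivity) (by linarith)

theorem learned_countSketch_multi_row_lower_general {k n B₁ B₂ : ℕ} (hk : 2 ≤ k) (hkB : k ≤ B₂)
    (hn : B₁ + B₂ ≤ n) (i : Fin (n - B₁)) :
    ((B₁ : ℝ) + B₂)⁻¹ / 16 ≤
      expUnif (fun ω : (Fin k → Fin (n - B₁) → Fin (B₂ / k)) × (Fin k → Fin (n - B₁) → Bool) =>
        |medianFin (fun ℓ : Fin k =>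
            sgn (ω.2 ℓ i) * ∑ j : Fin (n - B₁),
              if ω.1 ℓ j = ω.1 ℓ i then sgn (ω.2 ℓ j) * zipfTail B₁ j else 0) -
          zipfTail B₁ i|) := by
  have : NeZero (B₂ / k) := ⟨(Nat.div_pos hkB (by lia)).ne'⟩
  let J : Finset (Fin (n - B₁)) := insert i ({j | (j : ℕ) < B₂} : Finset (Fin (n - B₁)))
  have hJ : Fintype.card (Fin (B₂ / k)) * k ≤ #J :=
    calc Fintype.card (Fin (B₂ / k)) * k ≤ B₂ := by
          simpa using Nat.div_mul_le_self B₂ k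
      _ = #{j : Fin (n - B₁) | (j : ℕ) < B₂} := by
          rw [Fin.card_filter_val_lt, min_eq_right (by lia)]
      _ ≤ #J := card_le_card (subset_insert _ _)
  have hz (j : Fin (n - B₁)) (hj : j ∈ J) (hji : j ≠ i) : ((B₁ : ℝ) + B₂)⁻¹ ≤ zipfTail B₁ j :=
    inv_add_le_zipfTail B₁ (mem_filter_univ j |>.1 (mem_of_mem_insert_of_ne hj hji))
  have hB₂ : 0 < B₂ := by lia
  exact div_sixteen_le_expUnif_abs_medianFin_sub hk hJ (mem_insert_self _ _) (by positivity) hz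

end Zipf

/-- learned Count-Sketch with `k ≥ 3` rows (each of `⌊B₂/k⌋` buckets)
on the items `{B₁+1,...,n}` has expected error `Ω(1/B₂)` on each item. -/
theorem learned_countSketch_multi_row_lower :
    ∃ c : ℝ, 0 < c ∧
      ∀ k n B₁ B₂ : ℕ, Odd k → 3 ≤ k → 1 ≤ B₁ → B₁ ≤ B₂ → k ≤ B₂ → 2 * B₂ ≤ n →
        ∀ i : Fin (n - B₁),
          c / (B₂ : ℝ) ≤
            expUnif (fun ω : (Fin k → Fin (n - B₁) → Fin (B₂ / k)) ×
                (Fin k → Fin (n - B₁) → Bool) =>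
              |medianFin (fun ℓ : Fin k =>
                  sgn (ω.2 ℓ i) * ∑ j : Fin (n - B₁),
                    if ω.1 ℓ j = ω.1 ℓ i then sgn (ω.2 ℓ j) * zipfTail B₁ j else 0) -
                zipfTail B₁ i|) := by
  refine ⟨1 / 32, by norm_num, fun k n B₁ B₂ _ hk _ hB hkB hn i => ?_⟩
  refine le_trans ?_ (learned_countSketch_multi_row_lower_general (by lia) hkB (by lia) i)
  have hsum : (B₁ : ℝ) + B₂ ≤ 2 * B₂ := by rw [two_mul]; gcongr
  have hB₂ : (0 : ℝ) < B₂ := by norm_cast; lia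
  calc 1 / 32 / (B₂ : ℝ) = (2 * (B₂ : ℝ))⁻¹ / 16 := by ring
    _ ≤ ((B₁ : ℝ) + B₂)⁻¹ / 16 := by gcongr
end

section
/- For every fixed α > 1 there exists a constant c > 0 (depending only on α) such that the following holds. For all n, B, k ∈ ℕ with k ≥ 2, B ≥ 2 and k·B ≤ n, for truly random independent hash functions h_1,...,h_k : {1,...,n} → {1,...,B}, and for every i ∈ {1,...,n}, the Count-Min estimate f̃_i of the frequency f_i = 1/i^α satisfies E[f̃_i − f_i] ≥ c·(B^{−k} + (B·log k)^{−α}). -/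
/-- Generalized Zipfian frequency with exponent `α` of the item indexed by
`i : Fin n` (representing item `i+1`): `1/(i+1)^α`. -/
noncomputable def zipfGen (α : ℝ) {n : ℕ} (i : Fin n) : ℝ :=
  ((i : ℝ) + 1) ^ (-α)

/-- The Count-Min estimate of item `i` given the `k` hash functions `h`. -/
noncomputable def cmEst {n B k : ℕ} (f : Fin n → ℝ) (h : Fin k → Fin n → Fin B)
    (i : Fin n) : ℝ :=
  ⨅ ℓ : Fin k, ∑ j : Fin n, if h ℓ j = h ℓ i then f j else 0

/-!
Fix a set `S` of items other than `i`. A row in which some item of `S` shares the bucket of `i`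
overestimates `f i` by at least the smallest frequency in `S`. Conditioned on the bucket of `i`, the
items of `S` avoid it independently, so every one of the `k` rows has such a collision with
probability exactly `(1 - (1 - B⁻¹) ^ #S) ^ k`. Choose as `S` the `t` most frequent items other than
`i`. With `t = 1` the probability is `B ^ (-k)` while the error is of constant order. With
`t = ⌈B log k⌉` a row fails to collide with probability at most `1 / k`, so the probability is at
least `(1 - 1 / k) ^ k ≥ 1 / 4` while the error is of order `(B log k) ^ (-α)`.
-/

section Density

open Finset

theorem mul_dens_le_expUnif {Ω : Type*} [Fintype Ω] {X : Ω → ℝ} {v : ℝ} {A : Finset Ω}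
    (hX : 0 ≤ X) (hA : ∀ ω ∈ A, v ≤ X ω) : v * A.dens ≤ expUnif X := by
  rw [expUnif, nnratCast_dens, ← mul_div_assoc]
  gcongr
  calc v * #A = #A • v := by rw [nsmul_eq_mul, mul_comm]
    _ ≤ ∑ ω ∈ A, X ω := card_nsmul_le_sum A X v hA
    _ ≤ ∑ ω, X ω := sum_le_univ_sum_of_nonneg hX

variable {ι β : Type*} [Fintype ι] [DecidableEq ι] [Fintype β]

theorem dens_piFinset {δ : ι → Type*} [∀ j, Fintype (δ j)] (s : ∀ j, Finset (δ j)) :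
    (Fintype.piFinset s).dens = ∏ j, (s j).dens := by
  simp [dens_eq_card_div_card, prod_div_distrib]

variable [DecidableEq β] {i : ι} {S : Finset ι}

theorem dens_filter_forall_ne_and_eq (hi : i ∉ S) (b : β) :
    (({g : ι → β | (∀ j ∈ S, g j ≠ g i) ∧ g i = b} : Finset (ι → β)).dens : ℝ) =
      (Fintype.card β : ℝ)⁻¹ * (1 - (Fintype.card β : ℝ)⁻¹) ^ #S := by
  have : Nonempty β := ⟨b⟩
  let allowed (j : ι) : Finset β := if j = i then {b} else if j ∈ S then {b}ᶜ else univ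
  have fiber_eq : ({g : ι → β | (∀ j ∈ S, g j ≠ g i) ∧ g i = b} : Finset (ι → β)) =
      Fintype.piFinset allowed := by
    ext g
    simp only [mem_filter_univ, Fintype.mem_piFinset, allowed]
    refine ⟨fun ⟨hS, hb⟩ j ↦ ?_, fun h ↦ ?_⟩
    · split_ifs with hj hjS
      · simp [hj, hb]
      · simpa [hb] using hS j hjS
      · simp
    · have hb : g i = b := by simpa using h i
      refine ⟨fun j hj ↦ ?_, hb⟩
      have hji : j ≠ i := ne_of_mem_of_not_mem hj hi
      simpa [hji, hj, hb] using h j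
  have dens_allowed (j : ι) : ((allowed j).dens : ℝ) =
      (if j = i then (Fintype.card β : ℝ)⁻¹ else 1) *
        (if j ∈ S then 1 - (Fintype.card β : ℝ)⁻¹ else 1) := by
    by_cases hj : j = i
    · simp [allowed, hj, hi]
    · by_cases hjS : j ∈ S
      · simp [allowed, hj, hjS, nnratCast_dens, card_compl, Nat.cast_sub Fintype.card_pos, sub_div]
      · simp [allowed, hj, hjS]
  rw [fiber_eq, dens_piFinset, NNRat.cast_prod]
  simp only [dens_allowed, prod_mul_distrib, prod_ite_eq', mem_univ, if_true, prod_ite_mem,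
    univ_inter, prod_const]

variable [Nonempty β]

theorem dens_filter_forall_ne (hi : i ∉ S) :
    (({g : ι → β | ∀ j ∈ S, g j ≠ g i} : Finset (ι → β)).dens : ℝ) =
      (1 - (Fintype.card β : ℝ)⁻¹) ^ #S := by
  have dens_eq_sum_fiber :
      (({g : ι → β | ∀ j ∈ S, g j ≠ g i} : Finset (ι → β)).dens : ℝ) =
        ∑ b, (({g : ι → β | (∀ j ∈ S, g j ≠ g i) ∧ g i = b} : Finset (ι → β)).dens : ℝ) := by
    simp only [nnratCast_dens, ← sum_div, ← filter_filter]
    exact_mod_cast congrArg (fun m : ℕ ↦ (m : ℝ) / Fintype.card (ι → β))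
      (card_eq_sum_card_fiberwise (f := fun g : ι → β ↦ g i) (t := univ) (by simp))
  simp [dens_eq_sum_fiber, dens_filter_forall_ne_and_eq hi]

omit [DecidableEq β] in
theorem dens_filter_exists_eq [DecidablePred fun g : ι → β ↦ ∃ j ∈ S, g j = g i] (hi : i ∉ S) :
    (({g : ι → β | ∃ j ∈ S, g j = g i} : Finset (ι → β)).dens : ℝ) =
      1 - (1 - (Fintype.card β : ℝ)⁻¹) ^ #S := by
  classical
  have h := dens_filter_add_dens_filter_not_eq_dens (s := (univ : Finset (ι → β)))
    (fun g ↦ ∃ j ∈ S, g j = g i)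
  rw [dens_univ] at h
  push Not at h
  rw [← dens_filter_forall_ne hi, eq_sub_iff_add_eq]
  exact_mod_cast h

end Density

section CountMin

open Finset

variable {n B k : ℕ} {f : Fin n → ℝ} {i : Fin n}

theorem le_cmEst [NeZero k] (hf : 0 ≤ f) (h : Fin k → Fin n → Fin B) : f i ≤ cmEst f h i :=
  le_ciInf fun ℓ ↦ by
    rw [← sum_filter]
    exact single_le_sum (fun j _ ↦ hf j) (by simp)

theorem add_le_cmEst_of_forall_exists_eq [NeZero k] {v : ℝ} {S : Finset (Fin n)}
    {h : Fin k → Fin n → Fin B} (hf : 0 ≤ f) (hi : i ∉ S) (hv : ∀ j ∈ S, v ≤ f j)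
    (hcoll : ∀ ℓ, ∃ j ∈ S, h ℓ j = h ℓ i) : v + f i ≤ cmEst f h i :=
  le_ciInf fun ℓ ↦ by
    obtain ⟨j, hjS, hj⟩ := hcoll ℓ
    rw [← sum_filter]
    calc v + f i ≤ f j + f i := by gcongr; exact hv j hjS
      _ = ∑ x ∈ {j, i}, f x := (sum_pair (ne_of_mem_of_not_mem hjS hi)).symm
      _ ≤ ∑ x with h ℓ x = h ℓ i, f x :=
        sum_le_sum_of_subset_of_nonneg (by simp [insert_subset_iff, hj]) fun x _ _ ↦ hf x

theorem mul_pow_le_expUnif_cmEst_sub [NeZero B] [NeZero k] {v : ℝ} {S : Finset (Fin n)}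
    (hf : 0 ≤ f) (hi : i ∉ S) (hv : ∀ j ∈ S, v ≤ f j) :
    v * (1 - (1 - (B : ℝ)⁻¹) ^ #S) ^ k ≤
      expUnif fun h : Fin k → Fin n → Fin B ↦ cmEst f h i - f i := by
  let collides : Finset (Fin n → Fin B) := {g | ∃ j ∈ S, g j = g i}
  have le_error (h : Fin k → Fin n → Fin B) (hh : h ∈ Fintype.piFinset fun _ ↦ collides) :
      v ≤ cmEst f h i - f i :=
    le_sub_iff_add_le.2 <| add_le_cmEst_of_forall_exists_eq hf hi hv <| by
      simpa [collides] using hh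
  have dens_eq : ((Fintype.piFinset fun _ : Fin k ↦ collides).dens : ℝ) =
      (1 - (1 - (B : ℝ)⁻¹) ^ #S) ^ k := by
    simp [dens_piFinset, collides, dens_filter_exists_eq (β := Fin B) hi]
  rw [← dens_eq]
  exact mul_dens_le_expUnif (fun h ↦ sub_nonneg.2 (le_cmEst hf h)) le_error

theorem mul_pow_le_expUnif_cmEst_sub_of_antitone [NeZero B] [NeZero k] (hf : 0 ≤ f)
    (hanti : Antitone f) (t i : Fin n) :
    f t * (1 - (1 - (B : ℝ)⁻¹) ^ (t : ℕ)) ^ k ≤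
      expUnif fun h : Fin k → Fin n → Fin B ↦ cmEst f h i - f i := by
  have le_card : (t : ℕ) ≤ #((Iic t).erase i) := by
    simpa using pred_card_le_card_erase (s := Iic t) (a := i)
  obtain ⟨S, hS, card_S⟩ := exists_subset_card_eq le_card
  rw [← card_S]
  refine mul_pow_le_expUnif_cmEst_sub hf (fun hi ↦ notMem_erase i _ (hS hi)) fun j hj ↦ ?_
  exact hanti (mem_Iic.1 (mem_of_mem_erase (hS hj)))

end CountMin

section CeilMulLog

theorem one_sub_inv_pow_ceil_mul_log_le {b y : ℝ} (hb : 1 ≤ b) (hy : 0 < y) :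
    (1 - b⁻¹) ^ ⌈b * Real.log y⌉₊ ≤ y⁻¹ := by
  have one_sub_inv_nonneg : 0 ≤ 1 - b⁻¹ := sub_nonneg.2 (inv_le_one_of_one_le₀ hb)
  calc (1 - b⁻¹) ^ ⌈b * Real.log y⌉₊ ≤ Real.exp (-b⁻¹) ^ ⌈b * Real.log y⌉₊ := by
        gcongr
        exact Real.one_sub_le_exp_neg _
    _ = Real.exp (-(⌈b * Real.log y⌉₊ * b⁻¹)) := by rw [← Real.exp_nat_mul, mul_neg]
    _ ≤ Real.exp (-(b * Real.log y * b⁻¹)) := by gcongr; exact Nat.le_ceil _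
    _ = y⁻¹ := by rw [mul_right_comm, mul_inv_cancel₀ (by positivity), one_mul, Real.exp_neg,
        Real.exp_log hy]

theorem one_fourth_le_one_sub_inv_rpow {y : ℝ} (hy : 2 ≤ y) : 1 / 4 ≤ (1 - y⁻¹) ^ y := by
  have inv_le : y⁻¹ ≤ 1 := inv_le_one_of_one_le₀ (by linarith)
  -- Bernoulli's inequality with exponent `y` would only give the bound `0`.
  have bernoulli : 1 / 2 ≤ (1 - y⁻¹) ^ (y / 2) := by
    have h := one_add_mul_self_le_rpow_one_add (s := -y⁻¹) (p := y / 2) (by linarith) (by linarith)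
    rw [← sub_eq_add_neg] at h
    refine le_trans (le_of_eq ?_) h
    field_simp
    norm_num
  calc (1 / 4 : ℝ) = (1 / 2) ^ 2 := by norm_num
    _ ≤ ((1 - y⁻¹) ^ (y / 2)) ^ 2 := by gcongr
    _ = (1 - y⁻¹) ^ y := by
      rw [← Real.rpow_mul_natCast (sub_nonneg.2 inv_le), Nat.cast_ofNat,
        div_mul_cancel₀ y two_ne_zero]

theorem one_fourth_le_one_sub_one_sub_inv_pow_ceil_mul_log_pow {b : ℝ} {k : ℕ} (hb : 1 ≤ b)
    (hk : 2 ≤ k) : 1 / 4 ≤ (1 - (1 - b⁻¹) ^ ⌈b * Real.log k⌉₊) ^ k := by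
  have two_le : (2 : ℝ) ≤ k := mod_cast hk
  calc 1 / 4 ≤ (1 - (k : ℝ)⁻¹) ^ k := by
        simpa only [Real.rpow_natCast] using one_fourth_le_one_sub_inv_rpow two_le
    _ ≤ (1 - (1 - b⁻¹) ^ ⌈b * Real.log k⌉₊) ^ k := by
        gcongr
        · exact sub_nonneg.2 (inv_le_one_of_one_le₀ (by linarith))
        · exact one_sub_inv_pow_ceil_mul_log_le hb (by linarith)

theorem ceil_mul_log_lt_mul {B k : ℕ} (hB : 0 < B) (hk : 0 < k) :
    ⌈(B : ℝ) * Real.log k⌉₊ < k * B := by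
  have ceil_le : ⌈(B : ℝ) * Real.log k⌉₊ ≤ B * (k - 1) := by
    rw [Nat.ceil_le, Nat.cast_mul, Nat.cast_pred hk]
    gcongr
    exact Real.log_le_sub_one_of_pos (mod_cast hk)
  calc ⌈(B : ℝ) * Real.log k⌉₊ ≤ B * (k - 1) := ceil_le
    _ < B * k := Nat.mul_lt_mul_of_pos_left (Nat.sub_one_lt_of_lt hk) hB
    _ = k * B := mul_comm B k

theorem two_thirds_lt_mul_log {b y : ℝ} (hb : 1 ≤ b) (hy : 2 ≤ y) : 2 / 3 < b * Real.log y :=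
  calc 2 / 3 < Real.log 2 := by linarith [Real.log_two_gt_d9]
    _ ≤ Real.log y := Real.log_le_log two_pos hy
    _ ≤ b * Real.log y := le_mul_of_one_le_left (Real.log_nonneg (by linarith)) hb

end CeilMulLog

section Zipf

variable {α : ℝ} {n : ℕ}

theorem zipfGen_nonneg : 0 ≤ (zipfGen α : Fin n → ℝ) := fun i ↦ by
  simp only [Pi.zero_apply, zipfGen]
  positivity

theorem zipfGen_antitone (hα : 0 ≤ α) : Antitone (zipfGen α : Fin n → ℝ) := fun i j hij ↦
  Real.rpow_le_rpow_of_nonpos (by positivity) (by gcongr; exact hij) (neg_nonpos.2 hα)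

theorem rpow_mul_pow_le_expUnif_cmEst_zipfGen_sub {B k t : ℕ} [NeZero B] [NeZero k]
    (hα : 0 ≤ α) (ht : t < n) (i : Fin n) :
    ((t : ℝ) + 1) ^ (-α) * (1 - (1 - (B : ℝ)⁻¹) ^ t) ^ k ≤
      expUnif fun h : Fin k → Fin n → Fin B ↦ cmEst (zipfGen α) h i - zipfGen α i :=
  mul_pow_le_expUnif_cmEst_sub_of_antitone zipfGen_nonneg (zipfGen_antitone hα) ⟨t, ht⟩ i

theorem two_rpow_mul_rpow_le_expUnif_cmEst_zipfGen_sub {B k : ℕ} [NeZero B] [NeZero k]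
    (hα : 0 ≤ α) (hn : 1 < n) (i : Fin n) :
    2 ^ (-α) * (B : ℝ) ^ (-(k : ℝ)) ≤
      expUnif fun h : Fin k → Fin n → Fin B ↦ cmEst (zipfGen α) h i - zipfGen α i := by
  have h := rpow_mul_pow_le_expUnif_cmEst_zipfGen_sub (B := B) (k := k) hα hn i
  rwa [Nat.cast_one, one_add_one_eq_two, pow_one, sub_sub_cancel, inv_pow, ← Real.rpow_natCast,
    ← Real.rpow_neg B.cast_nonneg] at h

theorem four_rpow_mul_rpow_le_expUnif_cmEst_zipfGen_sub {B k : ℕ} [NeZero B] (hα : 0 ≤ α)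
    (hk : 2 ≤ k) (hn : ⌈(B : ℝ) * Real.log k⌉₊ < n) (i : Fin n) :
    4 ^ (-α) * ((B : ℝ) * Real.log k) ^ (-α) / 4 ≤
      expUnif fun h : Fin k → Fin n → Fin B ↦ cmEst (zipfGen α) h i - zipfGen α i := by
  have : NeZero k := ⟨by lia⟩
  have one_le_B : (1 : ℝ) ≤ B := mod_cast NeZero.one_le
  have large : 2 / 3 < (B : ℝ) * Real.log k := two_thirds_lt_mul_log one_le_B (mod_cast hk)
  set x : ℝ := B * Real.log k
  have ceil_add_one_le : (⌈x⌉₊ : ℝ) + 1 ≤ 4 * x := by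
    linarith [Nat.ceil_lt_add_one (by linarith : 0 ≤ x)]
  calc 4 ^ (-α) * x ^ (-α) / 4 = (4 * x) ^ (-α) * (1 / 4) := by
        rw [Real.mul_rpow (y := x) (by norm_num) (by linarith), mul_one_div]
    _ ≤ ((⌈x⌉₊ : ℝ) + 1) ^ (-α) * (1 - (1 - (B : ℝ)⁻¹) ^ ⌈x⌉₊) ^ k := by
        gcongr ?_ * ?_
        · exact Real.rpow_le_rpow_of_nonpos (by positivity) ceil_add_one_le (neg_nonpos.2 hα)
        · exact one_fourth_le_one_sub_one_sub_inv_pow_ceil_mul_log_pow one_le_B hk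
    _ ≤ _ := rpow_mul_pow_le_expUnif_cmEst_zipfGen_sub hα hn i

end Zipf

theorem countMin_genZipf_large_alpha_lower_general {α : ℝ} (hα : 0 ≤ α) {n B k : ℕ} (hk : 2 ≤ k)
    (hB : 0 < B) (hn : ⌈(B : ℝ) * Real.log k⌉₊ < n) (i : Fin n) :
    4 ^ (-α) / 8 * ((B : ℝ) ^ (-(k : ℝ)) + ((B : ℝ) * Real.log (k : ℝ)) ^ (-α)) ≤
      expUnif (fun h : Fin k → Fin n → Fin B => cmEst (zipfGen α) h i - zipfGen α i) := by
  have : NeZero B := ⟨hB.ne'⟩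
  have : NeZero k := ⟨by lia⟩
  have one_lt_n : 1 < n := by
    refine (Nat.one_le_ceil_iff.2 ?_).trans_lt hn
    linarith [two_thirds_lt_mul_log (b := B) (y := k) (mod_cast hB) (mod_cast hk)]
  have one_item := two_rpow_mul_rpow_le_expUnif_cmEst_zipfGen_sub (B := B) (k := k) hα one_lt_n i
  have many_items := four_rpow_mul_rpow_le_expUnif_cmEst_zipfGen_sub hα hk hn i
  have four_le_two : 4 ^ (-α) * (B : ℝ) ^ (-(k : ℝ)) ≤ 2 ^ (-α) * (B : ℝ) ^ (-(k : ℝ)) := by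
    gcongr ?_ * _
    exact Real.rpow_le_rpow_of_nonpos (by norm_num) (by norm_num) (neg_nonpos.2 hα)
  have : 0 ≤ 4 ^ (-α) * (B : ℝ) ^ (-(k : ℝ)) := by positivity
  linarith

/-- for Zipfian input with exponent `α > 1`, the expected
Count-Min error with `k ≥ 2` hash functions is at least
`c·(B^{-k} + (B·log k)^{-α})`. -/
theorem countMin_genZipf_large_alpha_lower :
    ∀ α : ℝ, 1 < α →
      ∃ c : ℝ, 0 < c ∧
        ∀ n B k : ℕ, 2 ≤ k → 2 ≤ B → k * B ≤ n → ∀ i : Fin n,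
          c * ((B : ℝ) ^ (-(k : ℝ)) + ((B : ℝ) * Real.log (k : ℝ)) ^ (-α)) ≤
            expUnif (fun h : Fin k → Fin n → Fin B =>
              cmEst (zipfGen α) h i - zipfGen α i) :=
  fun α hα ↦ ⟨4 ^ (-α) / 8, by positivity, fun _ _ _ hk hB hn ↦
    countMin_genZipf_large_alpha_lower_general (by linarith) hk (by lia)
      ((ceil_mul_log_lt_mul (by lia) (by lia)).trans_le hn)⟩
end

section
/- For every fixed α ∈ (0,1) there exist constants c_0 ≥ 1 and c > 0 (depending only on α) such that the following holds. For all n, B ∈ ℕ with n ≥ c_0·B, and for every (deterministic, arbitrary) function h : {1,...,n} → {1,...,B}, defining f̃_i = Σ_{j=1}^n 1[h(j)=h(i)]·(1/j^α) for each i ∈ {1,...,n}, one has Σ_{i=1}^n (1/i^α)·(f̃_i − 1/i^α) ≥ c·n^{2−2α}/B. -/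
/-!
The total weighted error is the sum of `f i * f j` over the ordered pairs of distinct items that
share a bucket. For `α ≥ 0` each of the `n` frequencies is at least that of the last item,
`n ^ (-α)`, so the error is at least `n ^ (-2α)` times the number of such pairs. By Cauchy-Schwarz
over the bucket sizes there are at least `n² / B - n` of them, which is a constant fraction of
`n² / B` as soon as `n` exceeds `B` by a constant factor.
-/

open Finset

section Collisions

variable {ι κ : Type*} [Fintype ι] [DecidableEq κ]

/-- The collisions of a hash function `h`: the pairs of distinct items that `h` puts in the same
bucket. Pairs are ordered, so each unordered collision is counted twice, as in the total error. -/
def collisions (h : ι → κ) : Finset (ι × ι) :=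
  {p ∈ (univ : Finset ι).offDiag | h p.1 = h p.2}

theorem sum_sum_ite_eq_sum_diag_add_sum_collisions {M : Type*} [AddCommMonoid M] (h : ι → κ)
    (g : ι → ι → M) :
    ∑ i, ∑ j, (if h j = h i then g i j else 0) =
      ∑ i, g i i + ∑ p ∈ collisions h, g p.1 p.2 := by
  classical
  rw [collisions, sum_filter, ← sum_product' univ univ, ← diag_union_offDiag,
    sum_union (disjoint_diag_offDiag _)]
  simp [diag, eq_comm]

theorem sum_mul_bucket_sum_sub_self {R : Type*} [NonUnitalNonAssocRing R] (h : ι → κ)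
    (f : ι → R) :
    ∑ i, f i * ((∑ j, if h j = h i then f j else 0) - f i) =
      ∑ p ∈ collisions h, f p.1 * f p.2 := by
  simp_rw [mul_sub, mul_sum, mul_ite, mul_zero, sum_sub_distrib,
    sum_sum_ite_eq_sum_diag_add_sum_collisions h fun i j ↦ f i * f j, add_sub_cancel_left]

theorem sum_card_bucket_sq [Fintype κ] (h : ι → κ) :
    ∑ b, #{i | h i = b} ^ 2 = Fintype.card ι + #(collisions h) :=
  calc ∑ b, #{i | h i = b} ^ 2
    _ = ∑ b, ∑ i with h i = b, #{j | h j = h i} := by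
      refine sum_congr rfl fun b _ ↦ ?_
      rw [sq, ← smul_eq_mul, ← sum_const]
      exact sum_congr rfl fun i hi ↦ by rw [(mem_filter.1 hi).2]
    _ = ∑ i, ∑ j, if h j = h i then 1 else 0 := by
      simp_rw [sum_fiberwise, card_filter]
    _ = Fintype.card ι + #(collisions h) := by
      rw [sum_sum_ite_eq_sum_diag_add_sum_collisions h fun _ _ ↦ 1, sum_const, sum_const,
        smul_eq_mul, smul_eq_mul, mul_one, mul_one, card_univ]

theorem sq_card_le_card_mul_card_add_card_collisions [Fintype κ] (h : ι → κ) :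
    Fintype.card ι ^ 2 ≤ Fintype.card κ * (Fintype.card ι + #(collisions h)) :=
  calc Fintype.card ι ^ 2
    _ = (∑ b, #{i | h i = b}) ^ 2 := by
      rw [← card_univ, card_eq_sum_card_fiberwise (f := h) fun _ _ ↦ mem_univ _]
    _ ≤ Fintype.card κ * ∑ b, #{i | h i = b} ^ 2 := sq_sum_le_card_mul_sum_sq
    _ = Fintype.card κ * (Fintype.card ι + #(collisions h)) := by rw [sum_card_bucket_sq]

theorem mul_sq_card_div_card_le_card_collisions [Fintype κ] (h : ι → κ) {c₀ : ℝ} (hc₀ : 0 < c₀)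
    (hcard : c₀ * Fintype.card κ ≤ Fintype.card ι) :
    (1 - c₀⁻¹) * (Fintype.card ι : ℝ) ^ 2 / Fintype.card κ ≤ #(collisions h) := by
  have cauchy_schwarz :
      (Fintype.card ι : ℝ) ^ 2 ≤ Fintype.card κ * (Fintype.card ι + #(collisions h)) :=
    mod_cast sq_card_le_card_mul_card_add_card_collisions h
  have diag_le : (Fintype.card κ : ℝ) * Fintype.card ι ≤ c₀⁻¹ * (Fintype.card ι : ℝ) ^ 2 := by
    rw [sq, ← mul_assoc]
    gcongr
    rwa [le_inv_mul_iff₀ hc₀]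
  exact div_le_of_le_mul₀ (by positivity) (by positivity) (by linarith)

theorem sq_mul_card_collisions_le_sum {R : Type*} [Semiring R] [PartialOrder R]
    [IsOrderedRing R] (h : ι → κ) {f : ι → R} {m : R} (hm : 0 ≤ m) (hf : ∀ i, m ≤ f i) :
    m ^ 2 * #(collisions h) ≤ ∑ p ∈ collisions h, f p.1 * f p.2 := by
  rw [← Nat.cast_comm, ← nsmul_eq_mul, sq]
  exact card_nsmul_le_sum _ _ _ fun p _ ↦
    mul_le_mul (hf p.1) (hf p.2) hm (hm.trans (hf p.1))

end Collisions

theorem rpow_neg_le_zipfGen {α : ℝ} (hα : 0 ≤ α) {n : ℕ} (i : Fin n) :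
    (n : ℝ) ^ (-α) ≤ zipfGen α i :=
  Real.rpow_le_rpow_of_nonpos (by positivity) (mod_cast i.2) (neg_nonpos.2 hα)

theorem rpow_two_sub_two_mul {x : ℝ} (hx : 0 < x) (a : ℝ) :
    x ^ (2 - 2 * a) = (x ^ (-a)) ^ 2 * x ^ 2 := by
  rw [← Real.rpow_mul_natCast hx.le, ← Real.rpow_natCast x 2, ← Real.rpow_add hx]
  congr 1
  push_cast
  ring

theorem countMin_deterministic_lower_small_alpha_general {α : ℝ} (hα : 0 ≤ α) {c₀ : ℝ}
    (hc₀ : 0 < c₀) {n B : ℕ} (hn : c₀ * (B : ℝ) ≤ (n : ℝ)) (h : Fin n → Fin B) :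
    (1 - c₀⁻¹) * (n : ℝ) ^ (2 - 2 * α) / (B : ℝ) ≤
      ∑ i : Fin n, zipfGen α i *
        ((∑ j : Fin n, if h j = h i then zipfGen α j else 0) - zipfGen α i) := by
  rcases n.eq_zero_or_pos with rfl | hn_pos
  · have hB : (B : ℝ) = 0 :=
      le_antisymm (nonpos_of_mul_nonpos_right (mod_cast hn) hc₀) B.cast_nonneg
    simp [hB]
  calc (1 - c₀⁻¹) * (n : ℝ) ^ (2 - 2 * α) / (B : ℝ)
    _ = ((n : ℝ) ^ (-α)) ^ 2 * ((1 - c₀⁻¹) * (n : ℝ) ^ 2 / B) := by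
      rw [rpow_two_sub_two_mul (mod_cast hn_pos)]
      ring
    _ ≤ ((n : ℝ) ^ (-α)) ^ 2 * #(collisions h) := by
      gcongr
      simpa using mul_sq_card_div_card_le_card_collisions h hc₀ (by simpa using hn)
    _ ≤ ∑ p ∈ collisions h, zipfGen α p.1 * zipfGen α p.2 :=
      sq_mul_card_collisions_le_sum h (by positivity) (rpow_neg_le_zipfGen hα)
    _ = _ := (sum_mul_bucket_sum_sub_self h (zipfGen α)).symm

/-- deterministic lower bound for `α ∈ (0,1)`: for any assignment
`h` of the `n` items to `B` buckets, the total frequency-weighted error of the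
bucket-total estimates is at least `c·n^{2-2α}/B`, provided `n ≥ c₀·B`. -/
theorem countMin_deterministic_lower_small_alpha :
    ∀ α : ℝ, 0 < α → α < 1 →
      ∃ c₀ c : ℝ, 1 ≤ c₀ ∧ 0 < c ∧
        ∀ n B : ℕ, c₀ * (B : ℝ) ≤ (n : ℝ) →
          ∀ h : Fin n → Fin B,
            c * (n : ℝ) ^ (2 - 2 * α) / (B : ℝ) ≤
              ∑ i : Fin n, zipfGen α i *
                ((∑ j : Fin n, if h j = h i then zipfGen α j else 0) -
                  zipfGen α i) :=
  fun _ hα _ ↦ ⟨2, 1 - 2⁻¹, by norm_num, by norm_num, fun _ _ hn h ↦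
    countMin_deterministic_lower_small_alpha_general hα.le two_pos hn h⟩
end
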